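/- arXiv:0904.3268 — 14 statements merged into one kernel-verified Lean document; each statement's English description precedes it below -/
import Mathlib

section
/- Let A be a normed algebra over 𝕜 (ℝ or ℂ), let X be a Banach space, let J be a left ideal of A containing an m-bounded approximate left identity for itself, let π : J → B(X) make X a non-degenerate normed left J-module, and let π̄ : A → B(X) be the extension of π. Then: (i) for each a ∈ A, π̄(a) is the unique bounded operator T on X satisfying T π(j) = π(aj) for all j ∈ J; (ii) for any bounded approximate left identity (e_i) of J for itself, π(e_i) converges to the identity operator of X in the strong operator topology, and for each a ∈ A, π(a e_i) converges to π̄(a) in the strong operator topology; (iii) if a ∈ A satisfies aj = j for all j ∈ J, then π̄(a) = id_X. -/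
open Filter Topology

/-- **Properties of the extension of a non-degenerate left module from a left ideal.**
Let `J` be a left ideal of a normed algebra `A` containing an `m`-bounded approximate left
identity for itself, `π : J → B(X)` a bounded homomorphism making the Banach space `X` a
non-degenerate left `J`-module, and let `π̄` be the (unique) algebra homomorphism extension
of `π` to `A`. Then: (i) `π̄(a)` is the unique bounded operator `T` with `T π(j) = π(aj)` for
all `j ∈ J`; (ii) for every bounded approximate left identity `(e_i)` of `J` for itself one has
`π(e_i) → id_X` and `π(a e_i) → π̄(a)` in the strong operator topology; (iii) if `aj = j` for
all `j ∈ J` then `π̄(a) = id_X`. -/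
theorem extension_from_left_ideal_properties
    {𝕜 : Type*} [RCLike 𝕜]
    {A : Type*} [NonUnitalNormedRing A] [NormedSpace 𝕜 A]
    [IsScalarTower 𝕜 A A] [SMulCommClass 𝕜 A A]
    {X : Type*} [NormedAddCommGroup X] [NormedSpace 𝕜 X] [CompleteSpace X]
    (J : NonUnitalSubalgebra 𝕜 A)
    (hJideal : ∀ a : A, ∀ j ∈ J, a * j ∈ J)
    (m : ℝ) {ι : Type*} (l : Filter ι) [l.NeBot] (e : ι → J)
    (he_bdd : ∀ i, ‖(e i : A)‖ ≤ m)
    (he_lim : ∀ j : J, Tendsto (fun i => (e i : A) * (j : A)) l (𝓝 (j : A)))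
    (π : J →L[𝕜] X →L[𝕜] X)
    (hπmul : ∀ j k : J, π (j * k) = π j * π k)
    (hnd : Dense (Submodule.span 𝕜 (Set.range fun p : J × X => π p.1 p.2) : Set X))
    (πb : A → X →L[𝕜] X)
    (hπb : IsLinearMap 𝕜 πb ∧ (∀ a b : A, πb (a * b) = πb a * πb b) ∧
      (∀ j : J, πb (j : A) = π j)) :
    -- (i) `π̄(a)` is the unique bounded operator `T` with `T π(j) = π(a j)` for all `j ∈ J`
    (∀ a : A, (∀ j : J, πb a * π j = π ⟨a * (j : A), hJideal a j j.2⟩) ∧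
      (∀ T : X →L[𝕜] X,
        (∀ j : J, T * π j = π ⟨a * (j : A), hJideal a j j.2⟩) → T = πb a)) ∧
    -- (ii) for every bounded approximate left identity of `J` for itself,
    -- `π(e_i) → id` and `π(a e_i) → π̄(a)` in the strong operator topology
    (∀ (κ : Type*) (l' : Filter κ) (_ : l'.NeBot) (e' : κ → J) (m' : ℝ),
      (∀ i, ‖(e' i : A)‖ ≤ m') →
      (∀ j : J, Tendsto (fun i => (e' i : A) * (j : A)) l' (𝓝 (j : A))) →
      ((∀ x : X, Tendsto (fun i => π (e' i) x) l' (𝓝 x)) ∧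
        (∀ a : A, ∀ x : X,
          Tendsto (fun i => π ⟨a * (e' i : A), hJideal a (e' i) (e' i).2⟩ x) l'
            (𝓝 (πb a x))))) ∧
    -- (iii) if `a` acts from the left on `J` as the identity, then `π̄(a) = id_X`
    (∀ a : A, (∀ j : J, a * (j : A) = (j : A)) → πb a = 1) := by
  obtain ⟨-, hmul, hext⟩ := hπb
  have key : ∀ a : A, ∀ j : J, πb a * π j = π ⟨a * (j : A), hJideal a j j.2⟩ := by
    intro a j
    rw [← hext, ← hext, ← hmul]
  have uniq : ∀ S T : X →L[𝕜] X, (∀ j : J, S * π j = T * π j) → S = T := by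
    intro S T h
    apply ContinuousLinearMap.ext_on hnd
    rintro _ ⟨⟨j, x⟩, rfl⟩
    exact congrArg (fun R : X →L[𝕜] X => R x) (h j)
  refine ⟨fun a => ⟨key a, fun T hT => uniq _ _ fun j => ?_⟩, ?_, ?_⟩
  · rw [hT, key]
  · intro κ l' _ e' m' hb hl
    have h1 : ∀ x : X, Tendsto (fun i => π (e' i) x) l' (𝓝 x) := by
      have hspan : ∀ y ∈ Submodule.span 𝕜 (Set.range fun p : J × X => π p.1 p.2),
          Tendsto (fun i => π (e' i) y) l' (𝓝 y) := by
        intro y hy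
        induction hy using Submodule.span_induction with
        | mem y hy =>
          obtain ⟨⟨j, z⟩, rfl⟩ := hy
          have hj : Tendsto (fun i => e' i * j) l' (𝓝 j) := by
            rw [tendsto_subtype_rng]
            exact hl j
          have h2 : Tendsto (fun i => π (e' i * j) z) l' (𝓝 (π j z)) :=
            (((ContinuousLinearMap.apply 𝕜 X z).continuous.comp π.continuous).tendsto j).comp hj
          simpa [hπmul] using h2
        | zero => simp
        | add x y _ _ hx hy => simpa using hx.add hy
        | smul c x _ hx => simpa using hx.const_smul c
      intro x
      obtain ⟨C, hC0, hC⟩ : ∃ C : ℝ, 0 ≤ C ∧ ∀ i, ‖π (e' i)‖ ≤ C := by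
        let π' : J.toSubmodule →L[𝕜] X →L[𝕜] X := π
        refine ⟨‖π'‖ * |m'|, by positivity, fun i => ?_⟩
        exact (π'.le_opNorm (e' i)).trans (mul_le_mul_of_nonneg_left
          ((hb i).trans (le_abs_self _)) (norm_nonneg _))
      rw [Metric.tendsto_nhds]
      intro ε hε
      have hδ : 0 < ε / (2 * (C + 1)) := by positivity
      obtain ⟨y, hy, hxy⟩ := Metric.dense_iff.1 hnd x _ hδ
      rw [Metric.mem_ball, dist_comm, dist_eq_norm, lt_div_iff₀ (by positivity)] at hy
      filter_upwards [Metric.tendsto_nhds.1 (hspan y hxy) (ε / 2) (by positivity)] with i hi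
      rw [dist_eq_norm] at hi ⊢
      have e1 : π (e' i) x - x = π (e' i) (x - y) + (π (e' i) y - y) - (x - y) := by
        rw [map_sub]; abel
      have e2 : ‖π (e' i) (x - y)‖ ≤ C * ‖x - y‖ := (π (e' i)).le_of_opNorm_le (hC i) _
      rw [e1]
      have e3 := norm_sub_le (π (e' i) (x - y) + (π (e' i) y - y)) (x - y)
      have e4 := norm_add_le (π (e' i) (x - y)) (π (e' i) y - y)
      linarith
    refine ⟨h1, fun a x => ?_⟩
    have h2 := ((πb a).continuous.tendsto x).comp (h1 x)
    refine h2.congr fun i => ?_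
    rw [← key]
    rfl
  · intro a ha
    refine uniq _ _ fun j => ?_
    rw [key, one_mul]
    congr 1
    exact Subtype.ext (ha j)
end

section
/- Let A be an ordered normed algebra over ℝ, let X be an ordered Banach space whose positive cone is closed, let J be a left ideal of A containing a positive m-bounded approximate left identity for itself, and let π : J → B(X) be a positive bounded algebra homomorphism making X a non-degenerate normed left J-module. Then the unique algebra homomorphism π̄ : A → B(X) extending π is positive, i.e., π̄(a) is a positive operator whenever a ≥ 0 in A. -/
open Filter Topology

/-- **Positivity of the extension.** Let `A` be an ordered real normed algebra (with positive
cone `PA` closed under addition, nonnegative scalar multiples and products), `X` an ordered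
Banach space whose positive cone `PX` is closed, `J` a left ideal of `A` containing a positive
`m`-bounded approximate left identity for itself, and `π : J → B(X)` a positive bounded algebra
homomorphism making `X` a non-degenerate normed left `J`-module. Then the unique algebra
homomorphism `π̄ : A → B(X)` extending `π` is positive. -/
theorem positive_extension_from_left_ideal
    {A : Type*} [NonUnitalNormedRing A] [NormedSpace ℝ A]
    [IsScalarTower ℝ A A] [SMulCommClass ℝ A A]
    (PA : Set A)
    (hPA_add : ∀ x ∈ PA, ∀ y ∈ PA, x + y ∈ PA)
    (hPA_smul : ∀ (c : ℝ), 0 ≤ c → ∀ x ∈ PA, c • x ∈ PA)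
    (hPA_mul : ∀ x ∈ PA, ∀ y ∈ PA, x * y ∈ PA)
    {X : Type*} [NormedAddCommGroup X] [NormedSpace ℝ X] [CompleteSpace X]
    (PX : Set X) (hPX_closed : IsClosed PX)
    (hPX_add : ∀ x ∈ PX, ∀ y ∈ PX, x + y ∈ PX)
    (hPX_smul : ∀ (c : ℝ), 0 ≤ c → ∀ x ∈ PX, c • x ∈ PX)
    (J : NonUnitalSubalgebra ℝ A)
    (hJideal : ∀ a : A, ∀ j ∈ J, a * j ∈ J)
    (m : ℝ) {ι : Type*} (l : Filter ι) [l.NeBot] (e : ι → J)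
    (he_bdd : ∀ i, ‖(e i : A)‖ ≤ m)
    (he_pos : ∀ i, (e i : A) ∈ PA)
    (he_lim : ∀ j : J, Tendsto (fun i => (e i : A) * (j : A)) l (𝓝 (j : A)))
    (π : J →L[ℝ] X →L[ℝ] X)
    (hπmul : ∀ j k : J, π (j * k) = π j * π k)
    (hπpos : ∀ j : J, (j : A) ∈ PA → ∀ x ∈ PX, π j x ∈ PX)
    (hnd : Dense (Submodule.span ℝ (Set.range fun p : J × X => π p.1 p.2) : Set X))
    (πb : A → X →L[ℝ] X)
    (hπb : IsLinearMap ℝ πb ∧ (∀ a b : A, πb (a * b) = πb a * πb b) ∧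
      (∀ j : J, πb (j : A) = π j)) :
    ∀ a ∈ PA, ∀ x ∈ PX, πb a x ∈ PX := by
  obtain ⟨-, hmul, hext⟩ := hπb
  have hlim0 : ∀ y ∈ Submodule.span ℝ (Set.range fun p : J × X => π p.1 p.2),
      Tendsto (fun i => π (e i) y) l (𝓝 y) := by
    intro y hy
    induction hy using Submodule.span_induction with
    | mem y hy =>
      obtain ⟨⟨j, z⟩, rfl⟩ := hy
      have h1 : Tendsto (fun i => e i * j) l (𝓝 j) := by
        rw [tendsto_subtype_rng]
        exact he_lim j
      have h2 : Tendsto (fun i => π (e i * j)) l (𝓝 (π j)) :=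
        (π.continuous.tendsto j).comp h1
      have h3 : Tendsto (fun i => π (e i * j) z) l (𝓝 (π j z)) :=
        ((ContinuousLinearMap.apply ℝ X z).continuous.tendsto (π j)).comp h2
      simpa [hπmul] using h3
    | zero => simp
    | add y z _ _ hy hz => simpa using hy.add hz
    | smul c y _ hy => simpa using hy.const_smul c
  obtain ⟨K, hK0, hK⟩ : ∃ K : ℝ, 0 ≤ K ∧ ∀ i, ‖π (e i)‖ ≤ K := by
    let π' : J.toSubmodule →L[ℝ] X →L[ℝ] X := 
      { toFun := fun j => π ⟨j.1, j.2⟩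
        map_add' := fun x y => π.map_add ⟨x.1, x.2⟩ ⟨y.1, y.2⟩
        map_smul' := fun c x => π.map_smul c ⟨x.1, x.2⟩
        cont := π.continuous.comp (continuous_subtype_val.subtype_mk _) }
    refine ⟨‖π'‖ * |m|, by positivity, fun i => ?_⟩
    exact (π'.le_opNorm ⟨(e i).1, (e i).2⟩).trans (mul_le_mul_of_nonneg_left
      ((he_bdd i).trans (le_abs_self m)) (norm_nonneg _))
  have hlim : ∀ y, Tendsto (fun i => π (e i) y) l (𝓝 y) := by
    intro y
    rw [Metric.tendsto_nhds]
    intro ε hε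
    have hd : 0 < ε / (2 * (K + 1)) := by positivity
    obtain ⟨z, hz, hyz⟩ := Metric.mem_closure_iff.1 (hnd y) _ hd
    filter_upwards [Metric.tendsto_nhds.1 (hlim0 z hz) (ε / 2) (by positivity)] with i hi
    rw [dist_eq_norm] at *
    have h1 : ‖π (e i) (y - z)‖ ≤ K * ‖y - z‖ :=
      ((π (e i)).le_opNorm _).trans (mul_le_mul_of_nonneg_right (hK i) (norm_nonneg _))
    have h2 : (K + 1) * ‖y - z‖ < ε / 2 := by
      rw [lt_div_iff₀ (by positivity)] at hyz
      linarith
    have h3 : π (e i) y - y = π (e i) (y - z) + (π (e i) z - z) - (y - z) := by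
      rw [map_sub]; abel
    rw [h3]
    have h4 := norm_sub_le (π (e i) (y - z) + (π (e i) z - z)) (y - z)
    have h5 := norm_add_le (π (e i) (y - z)) (π (e i) z - z)
    linarith
  intro a ha x hx
  refine hPX_closed.mem_of_tendsto (((πb a).continuous.tendsto x).comp (hlim x))
    (Eventually.of_forall fun i => ?_)
  have h := hπpos ⟨a * e i, hJideal a _ (e i).2⟩ (hPA_mul a ha _ (he_pos i)) x hx
  rw [← hext] at h
  simpa [hmul, hext] using h
end

section
/- Let A be a normed algebra over ℂ equipped with an involution (a conjugate-linear anti-homomorphism of order 2, not assumed bounded), let J be a left ideal of A that is invariant under the involution (hence a two-sided ideal) and contains an m-bounded approximate left identity for itself, let H be a complex Hilbert space, and let π : J → B(H) be a bounded, involutive algebra homomorphism making H a non-degenerate normed left J-module. Then the unique algebra homomorphism π̄ : A → B(H) extending π is involutive: π̄(a*) = π̄(a)* for all a ∈ A. -/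
open Filter Topology

/-- **Involutivity of the extension.** Let `A` be a complex normed algebra with an involution
(not assumed bounded), `J` a star-invariant left ideal of `A` containing an `m`-bounded
approximate left identity for itself, `H` a complex Hilbert space, and `π : J → B(H)` a
bounded involutive algebra homomorphism making `H` a non-degenerate normed left `J`-module.
Then the unique algebra homomorphism `π̄ : A → B(H)` extending `π` is involutive:
`π̄(a*) = π̄(a)*` for all `a ∈ A`. -/
theorem involutive_extension_from_left_ideal
    {A : Type*} [NonUnitalNormedRing A] [NormedSpace ℂ A]
    [IsScalarTower ℂ A A] [SMulCommClass ℂ A A]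
    [StarRing A] [StarModule ℂ A]
    {H : Type*} [NormedAddCommGroup H] [InnerProductSpace ℂ H] [CompleteSpace H]
    (J : NonUnitalSubalgebra ℂ A)
    (hJideal : ∀ a : A, ∀ j ∈ J, a * j ∈ J)
    (hJstar : ∀ j ∈ J, star j ∈ J)
    (m : ℝ) {ι : Type*} (l : Filter ι) [l.NeBot] (e : ι → J)
    (he_bdd : ∀ i, ‖(e i : A)‖ ≤ m)
    (he_lim : ∀ j : J, Tendsto (fun i => (e i : A) * (j : A)) l (𝓝 (j : A)))
    (π : J →L[ℂ] H →L[ℂ] H)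
    (hπmul : ∀ j k : J, π (j * k) = π j * π k)
    (hπstar : ∀ j : J, π ⟨star (j : A), hJstar j j.2⟩ = ContinuousLinearMap.adjoint (π j))
    (hnd : Dense (Submodule.span ℂ (Set.range fun p : J × H => π p.1 p.2) : Set H))
    (πb : A → H →L[ℂ] H)
    (hπb : IsLinearMap ℂ πb ∧ (∀ a b : A, πb (a * b) = πb a * πb b) ∧
      (∀ j : J, πb (j : A) = π j)) :
    ∀ a : A, πb (star a) = ContinuousLinearMap.adjoint (πb a) := by
  obtain ⟨-, hmul, hext⟩ := hπb
  intro a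
  have key : ∀ j : J, πb (star a) * π j = ContinuousLinearMap.adjoint (πb a) * π j := by
    intro j
    have h1 := hπstar ⟨star a * j, hJideal _ _ j.2⟩
    have h2 := hπstar j
    rw [← hext, ← hext] at h1 h2
    simp only [star_mul, star_star, hmul] at h1 h2
    rw [h2, hext] at h1
    have h3 := congrArg star h1
    rw [← ContinuousLinearMap.star_eq_adjoint, ← ContinuousLinearMap.star_eq_adjoint, star_star,
      star_mul, star_star] at h3
    rw [← ContinuousLinearMap.star_eq_adjoint]
    exact h3.symm
  refine ContinuousLinearMap.ext_on hnd ?_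
  rintro _ ⟨⟨j, x⟩, rfl⟩
  exact congrArg (fun T : H →L[ℂ] H => T x) (key j)
end

section
/- Let A be a normed algebra with an m-bounded approximate left identity, let X be a normed space, and let π_l : A → B(X) be a bounded algebra homomorphism making X a non-degenerate normed left A-module. Then π_l vanishes on the kernel of the canonical map λ : A → M_l(A), and hence there is a unique map π̃_l : λ(A) → B(X) with π̃_l ∘ λ = π_l; this π̃_l is a bounded algebra homomorphism with ‖π̃_l‖ ≤ m‖π_l‖, making X a non-degenerate normed left λ(A)-module, and one has π̃_l(λ(a))x = lim_i π_l(λ(a) e_i)x for every a ∈ A, x ∈ X, and every bounded approximate left identity (e_i) of A. -/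
open Filter Topology

theorem ali_tendsto_aux
    {𝕜 : Type*} [RCLike 𝕜]
    {A : Type*} [NonUnitalNormedRing A] [NormedSpace 𝕜 A]
    {X : Type*} [NormedAddCommGroup X] [NormedSpace 𝕜 X]
    (π : A →L[𝕜] X →L[𝕜] X)
    (hπmul : ∀ a b : A, π (a * b) = π a * π b)
    (hnd : Dense (Submodule.span 𝕜 (Set.range fun p : A × X => π p.1 p.2) : Set X))
    {κ : Type*} (l : Filter κ) (hl : l.NeBot) (e : κ → A) (m : ℝ)
    (hb : ∀ i, ‖e i‖ ≤ m)
    (he : ∀ a : A, Tendsto (fun i => e i * a) l (𝓝 a)) (x : X) :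
    Tendsto (fun i => π (e i) x) l (𝓝 x) := by
  obtain ⟨i0⟩ := hl.nonempty
  have hm : 0 ≤ m := (norm_nonneg _).trans (hb i0)
  have hspan : ∀ y ∈ Submodule.span 𝕜 (Set.range fun p : A × X => π p.1 p.2),
      Tendsto (fun i => π (e i) y) l (𝓝 y) := by
    intro y hy
    induction hy using Submodule.span_induction with
    | mem y hy =>
      obtain ⟨⟨a, z⟩, rfl⟩ := hy
      have h1 : Tendsto (fun i => π (e i * a) z) l (𝓝 (π a z)) := by
        have hc : Continuous (fun b : A => π b z) := by fun_prop
        exact (hc.tendsto a).comp (he a)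
      simpa [hπmul] using h1
    | zero => simp
    | add y z _ _ hy hz => simpa using hy.add hz
    | smul c y _ hy => simpa using hy.const_smul c
  have hbd : ∀ i y, ‖π (e i) y‖ ≤ ‖π‖ * m * ‖y‖ := fun i y =>
    (π.le_opNorm₂ (e i) y).trans (by gcongr; exact hb i)
  set C := ‖π‖ * m + 1 with hC
  have hC0 : 0 < C := by positivity
  rw [Metric.tendsto_nhds]
  intro ε hε
  obtain ⟨y, hy, hxy⟩ := Metric.dense_iff.1 hnd x (ε / (2 * C)) (by positivity)
  have hxy' : ‖x - y‖ < ε / (2 * C) := by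
    rw [Metric.mem_ball, dist_comm, dist_eq_norm] at hy
    exact hy
  filter_upwards [Metric.tendsto_nhds.1 (hspan y hxy) (ε / 2) (by positivity)] with i hi
  rw [dist_eq_norm] at hi ⊢
  have h1 : π (e i) x - x = π (e i) (x - y) + (π (e i) y - y) - (x - y) := by
    rw [map_sub]; abel
  have h2 : C * ‖x - y‖ < ε / 2 := by
    have := mul_lt_mul_of_pos_left hxy' hC0
    have h3 : C * (ε / (2 * C)) = ε / 2 := by field_simp
    linarith
  have h4 := hbd i (x - y)
  calc ‖π (e i) x - x‖ ≤ ‖π (e i) (x - y)‖ + ‖π (e i) y - y‖ + ‖x - y‖ := by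
        rw [h1]
        exact (norm_sub_le _ _).trans (by gcongr; exact norm_add_le _ _)
    _ < ε := by
        rw [hC] at h2
        linarith

/-- **The induced module structure for `λ(A)`.** Let `A` be a normed algebra with an
`m`-bounded approximate left identity, `X` a normed space, and `π_l : A → B(X)` a bounded
algebra homomorphism making `X` a non-degenerate normed left `A`-module. Then `π_l` vanishes
on the kernel of the canonical map `λ : A → M_l(A)` (`λ(a)b = ab`), and there is a unique map
`π̃_l : λ(A) → B(X)` with `π̃_l ∘ λ = π_l`; it is a bounded algebra homomorphism with
`‖π̃_l‖ ≤ m‖π_l‖`, it makes `X` a non-degenerate normed left `λ(A)`-module, and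
`π̃_l(λ(a))x = lim_i π_l(λ(a)e_i)x` for every bounded approximate left identity `(e_i)`. -/
theorem induced_module_on_lambda_image
    {𝕜 : Type*} [RCLike 𝕜]
    {A : Type*} [NonUnitalNormedRing A] [NormedSpace 𝕜 A]
    [IsScalarTower 𝕜 A A] [SMulCommClass 𝕜 A A]
    {X : Type*} [NormedAddCommGroup X] [NormedSpace 𝕜 X]
    (m : ℝ) {ι : Type*} (l : Filter ι) [l.NeBot] (e : ι → A)
    (he_bdd : ∀ i, ‖e i‖ ≤ m)
    (he_lim : ∀ a : A, Tendsto (fun i => e i * a) l (𝓝 a))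
    (π : A →L[𝕜] X →L[𝕜] X)
    (hπmul : ∀ a b : A, π (a * b) = π a * π b)
    (hnd : Dense (Submodule.span 𝕜 (Set.range fun p : A × X => π p.1 p.2) : Set X)) :
    -- `π_l` vanishes on the kernel of `λ`
    (∀ a : A, ContinuousLinearMap.mul 𝕜 A a = 0 → π a = 0) ∧
    -- the unique factorization `π̃_l` of `π_l` through `λ(A)`
    (∃ πt : (Set.range fun a : A => ContinuousLinearMap.mul 𝕜 A a) → X →L[𝕜] X,
      (∀ a : A, πt ⟨ContinuousLinearMap.mul 𝕜 A a, a, rfl⟩ = π a) ∧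
      -- `π̃_l` is bounded with `‖π̃_l‖ ≤ m ‖π_l‖`
      (∀ a : A, ‖π a‖ ≤ m * ‖π‖ * ‖ContinuousLinearMap.mul 𝕜 A a‖) ∧
      -- `X` is a non-degenerate normed left `λ(A)`-module via `π̃_l`
      Dense (Submodule.span 𝕜
        (Set.range fun p :
          (Set.range fun a : A => ContinuousLinearMap.mul 𝕜 A a) × X =>
            πt p.1 p.2) : Set X) ∧
      -- `π̃_l(λ(a))x = lim_i π_l(λ(a)e_i)x` for every bounded approximate left identity
      (∀ (κ : Type*) (l' : Filter κ), l'.NeBot → ∀ (e' : κ → A) (m' : ℝ),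
        (∀ i, ‖e' i‖ ≤ m') →
        (∀ a : A, Tendsto (fun i => e' i * a) l' (𝓝 a)) →
        ∀ (a : A) (x : X),
          Tendsto (fun i => π (ContinuousLinearMap.mul 𝕜 A a (e' i)) x) l'
            (𝓝 (πt ⟨ContinuousLinearMap.mul 𝕜 A a, a, rfl⟩ x))) ∧
      -- uniqueness of `π̃_l`
      (∀ σ : (Set.range fun a : A => ContinuousLinearMap.mul 𝕜 A a) → X →L[𝕜] X,
        (∀ a : A, σ ⟨ContinuousLinearMap.mul 𝕜 A a, a, rfl⟩ = π a) → σ = πt)) := by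
  have hlim : ∀ (a : A) (x : X), Tendsto (fun i => π (a * e i) x) l (𝓝 (π a x)) := by
    intro a x
    have h := ((π a).continuous.tendsto x).comp
      (ali_tendsto_aux π hπmul hnd l inferInstance e m he_bdd he_lim x)
    simpa [hπmul, Function.comp_def] using h
  obtain ⟨i0⟩ := (inferInstance : l.NeBot).nonempty
  have hm : 0 ≤ m := (norm_nonneg _).trans (he_bdd i0)
  have hnorm : ∀ a : A, ‖π a‖ ≤ m * ‖π‖ * ‖ContinuousLinearMap.mul 𝕜 A a‖ := by
    intro a
    refine ContinuousLinearMap.opNorm_le_bound _ (by positivity) fun x => ?_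
    refine le_of_tendsto (hlim a x).norm (Eventually.of_forall fun i => ?_)
    have h1 : ‖a * e i‖ ≤ ‖ContinuousLinearMap.mul 𝕜 A a‖ * m :=
      ((ContinuousLinearMap.mul 𝕜 A a).le_opNorm (e i)).trans (by gcongr; exact he_bdd i)
    calc ‖π (a * e i) x‖ ≤ ‖π‖ * ‖a * e i‖ * ‖x‖ := π.le_opNorm₂ _ _
      _ ≤ ‖π‖ * (‖ContinuousLinearMap.mul 𝕜 A a‖ * m) * ‖x‖ := by gcongr
      _ = _ := by ring
  have hker : ∀ a : A, ContinuousLinearMap.mul 𝕜 A a = 0 → π a = 0 := by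
    intro a ha
    have h := hnorm a
    rw [ha, norm_zero, mul_zero] at h
    exact norm_le_zero_iff.1 h
  have hfac : ∀ a : A, π (Classical.choose
      (⟨a, rfl⟩ : ContinuousLinearMap.mul 𝕜 A a ∈
        Set.range fun a : A => ContinuousLinearMap.mul 𝕜 A a)) = π a := by
    intro a
    have h := Classical.choose_spec (⟨a, rfl⟩ : ContinuousLinearMap.mul 𝕜 A a ∈
        Set.range fun a : A => ContinuousLinearMap.mul 𝕜 A a)
    rw [← sub_eq_zero, ← map_sub]
    apply hker
    rw [map_sub, sub_eq_zero]
    exact h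
  refine ⟨hker, fun T => π (Classical.choose T.2), hfac, hnorm, ?_, ?_, ?_⟩
  · refine hnd.mono (Submodule.span_mono ?_)
    rintro _ ⟨⟨a, x⟩, rfl⟩
    exact ⟨⟨⟨ContinuousLinearMap.mul 𝕜 A a, a, rfl⟩, x⟩, congrArg (fun T => T x) (hfac a)⟩
  · intro κ l' hl' e' m' hb he a x
    have h := ((π a).continuous.tendsto x).comp
      (ali_tendsto_aux π hπmul hnd l' hl' e' m' hb he x)
    have h2 : Tendsto (fun i => π (ContinuousLinearMap.mul 𝕜 A a (e' i)) x) l' (𝓝 (π a x)) := by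
      simpa [hπmul, Function.comp_def] using h
    rw [← hfac a] at h2
    exact h2
  · intro σ hσ
    funext ⟨T, a, ha⟩
    subst ha
    exact (hσ a).trans (hfac a).symm
end

section
/- Let A be a normed algebra with an m-bounded approximate left identity, let X be a Banach space, and let π_l : A → B(X) be a bounded algebra homomorphism making X a non-degenerate normed left A-module. Then there exists a unique algebra homomorphism π̄_l : M_l(A) → B(X) such that π̄_l ∘ λ = π_l, where λ : A → M_l(A) is the canonical map. This π̄_l is unital and bounded with ‖π̄_l‖ ≤ m‖π_l‖, X becomes a non-degenerate normed left M_l(A)-module, π̄_l(L)π_l(a) = π_l(L(a)) for all L ∈ M_l(A) and a ∈ A (so π_l(A) is a left ideal in π̄_l(M_l(A))), and for any bounded approximate left identity (e_i) of A one has π_l(e_i) → id_X and π̄_l(L) = lim_i π_l(L(e_i)) in the strong operator topology. -/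
open Filter Topology

/-- A left centralizer of a normed algebra `A`: a bounded operator `L` on `A` with
`L(ab) = L(a)b`. The left centralizer algebra `M_l(A)` is the set of all of these. -/
def LeftCentralizers (𝕜 : Type*) (A : Type*) [RCLike 𝕜] [NonUnitalNormedRing A]
    [NormedSpace 𝕜 A] [IsScalarTower 𝕜 A A] [SMulCommClass 𝕜 A A] :
    Set (A →L[𝕜] A) :=
  {L | ∀ a b : A, L (a * b) = L a * b}

theorem lcm_aux {𝕜 : Type*} [RCLike 𝕜]
    {X : Type*} [NormedAddCommGroup X] [NormedSpace 𝕜 X] [CompleteSpace X]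
    {ι : Type*} (l : Filter ι) [l.NeBot] (T : ι → X →L[𝕜] X) (C : ℝ)
    (hT : ∀ i, ‖T i‖ ≤ C) (s : Set X) (hs : Dense (Submodule.span 𝕜 s : Set X))
    (h : ∀ x ∈ s, ∃ z, Tendsto (fun i => T i x) l (𝓝 z)) :
    ∃ S : X →L[𝕜] X, ‖S‖ ≤ C ∧ ∀ x, Tendsto (fun i => T i x) l (𝓝 (S x)) := by
  obtain ⟨i0⟩ := l.nonempty_of_neBot
  have hC : 0 ≤ C := (norm_nonneg _).trans (hT i0)
  have h1 : ∀ x ∈ Submodule.span 𝕜 s, ∃ z, Tendsto (fun i => T i x) l (𝓝 z) := by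
    intro x hx
    induction hx using Submodule.span_induction with
    | mem x hx => exact h x hx
    | zero => exact ⟨0, by simp⟩
    | add x y _ _ hx hy =>
      obtain ⟨z, hz⟩ := hx
      obtain ⟨w, hw⟩ := hy
      exact ⟨z + w, by simpa using hz.add hw⟩
    | smul c x _ hx =>
      obtain ⟨z, hz⟩ := hx
      exact ⟨c • z, by simpa using hz.const_smul c⟩
  have h2 : ∀ x, ∃ z, Tendsto (fun i => T i x) l (𝓝 z) := by
    intro x
    have hc : Cauchy (map (fun i => T i x) l) := by
      rw [Metric.cauchy_iff]
      refine ⟨inferInstance, fun ε hε => ?_⟩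
      have hδ : 0 < ε / (4 * (C + 1)) := by positivity
      obtain ⟨y, hy, hxy⟩ := hs.exists_dist_lt x hδ
      obtain ⟨z, hz⟩ := h1 y hy
      have hb : C * dist x y < ε / 4 := by
        calc C * dist x y ≤ (C + 1) * dist x y := by gcongr; linarith
          _ < (C + 1) * (ε / (4 * (C + 1))) := by gcongr
          _ = ε / 4 := by field_simp
      have hn : ∀ᶠ i in l, dist (T i x) z < ε / 2 := by
        filter_upwards [Metric.tendsto_nhds.1 hz (ε / 4) (by positivity)] with i hi
        have : dist (T i x) (T i y) ≤ C * dist x y := by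
          rw [dist_eq_norm, dist_eq_norm, ← map_sub]
          exact (T i).le_of_opNorm_le (hT i) _
        linarith [dist_triangle (T i x) (T i y) z]
      refine ⟨Metric.ball z (ε / 2), hn, fun u hu v hv => ?_⟩
      rw [Metric.mem_ball] at hu hv
      linarith [dist_triangle_right u v z]
    obtain ⟨z, hz⟩ := CompleteSpace.complete hc
    exact ⟨z, hz⟩
  choose f hf using h2
  let g : X →ₗ[𝕜] X :=
    { toFun := f
      map_add' := fun x y => tendsto_nhds_unique (hf (x + y)) (by simpa using (hf x).add (hf y))
      map_smul' := fun c x =>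
        tendsto_nhds_unique (hf (c • x)) (by simpa using (hf x).const_smul c) }
  have hg : ∀ x, ‖g x‖ ≤ C * ‖x‖ := fun x =>
    le_of_tendsto (hf x).norm (Eventually.of_forall fun i => (T i).le_of_opNorm_le (hT i) _)
  exact ⟨g.mkContinuous C hg, g.mkContinuous_norm_le hC hg, fun x => hf x⟩

/-- **Module structures for the left centralizer algebra.** Let `A` be a normed algebra with
an `m`-bounded approximate left identity, `X` a Banach space, and `π_l : A → B(X)` a bounded
algebra homomorphism making `X` a non-degenerate normed left `A`-module. Then there is a
unique algebra homomorphism `π̄_l : M_l(A) → B(X)` with `π̄_l ∘ λ = π_l`; it is unital and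
bounded with `‖π̄_l‖ ≤ m‖π_l‖`, `X` becomes a non-degenerate normed left `M_l(A)`-module,
`π̄_l(L)π_l(a) = π_l(L(a))` for all `L ∈ M_l(A)` and `a ∈ A`, and for any bounded approximate
left identity `(e_i)` of `A` one has `π_l(e_i) → id_X` and `π̄_l(L) = SOT-lim π_l(L(e_i))`. -/
theorem left_centralizer_module
    {𝕜 : Type*} [RCLike 𝕜]
    {A : Type*} [NonUnitalNormedRing A] [NormedSpace 𝕜 A]
    [IsScalarTower 𝕜 A A] [SMulCommClass 𝕜 A A]
    {X : Type*} [NormedAddCommGroup X] [NormedSpace 𝕜 X] [CompleteSpace X]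
    (m : ℝ) {ι : Type*} (l : Filter ι) [l.NeBot] (e : ι → A)
    (he_bdd : ∀ i, ‖e i‖ ≤ m)
    (he_lim : ∀ a : A, Tendsto (fun i => e i * a) l (𝓝 a))
    (π : A →L[𝕜] X →L[𝕜] X)
    (hπmul : ∀ a b : A, π (a * b) = π a * π b)
    (hnd : Dense (Submodule.span 𝕜 (Set.range fun p : A × X => π p.1 p.2) : Set X)) :
    ∃ πb : LeftCentralizers 𝕜 A → X →L[𝕜] X,
      -- `π̄_l` is an algebra homomorphism with `π̄_l ∘ λ = π_l` ...
      ((∀ (L K : LeftCentralizers 𝕜 A) (h : (L : A →L[𝕜] A) + K ∈ LeftCentralizers 𝕜 A),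
          πb ⟨(L : A →L[𝕜] A) + K, h⟩ = πb L + πb K) ∧
        (∀ (c : 𝕜) (L : LeftCentralizers 𝕜 A)
          (h : c • (L : A →L[𝕜] A) ∈ LeftCentralizers 𝕜 A),
          πb ⟨c • (L : A →L[𝕜] A), h⟩ = c • πb L) ∧
        (∀ (L K : LeftCentralizers 𝕜 A) (h : (L : A →L[𝕜] A) * K ∈ LeftCentralizers 𝕜 A),
          πb ⟨(L : A →L[𝕜] A) * K, h⟩ = πb L * πb K) ∧
        (∀ (a : A) (h : ContinuousLinearMap.mul 𝕜 A a ∈ LeftCentralizers 𝕜 A),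
          πb ⟨ContinuousLinearMap.mul 𝕜 A a, h⟩ = π a)) ∧
      -- ... which is unital,
      (∀ h : (1 : A →L[𝕜] A) ∈ LeftCentralizers 𝕜 A, πb ⟨1, h⟩ = 1) ∧
      -- bounded with `‖π̄_l‖ ≤ m ‖π_l‖`,
      (∀ L : LeftCentralizers 𝕜 A, ‖πb L‖ ≤ m * ‖π‖ * ‖(L : A →L[𝕜] A)‖) ∧
      -- makes `X` a non-degenerate normed left `M_l(A)`-module,
      Dense (Submodule.span 𝕜
        (Set.range fun p : LeftCentralizers 𝕜 A × X => πb p.1 p.2) : Set X) ∧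
      -- satisfies `π̄_l(L) π_l(a) = π_l(L(a))` (so `π_l(A)` is a left ideal in the image),
      (∀ (L : LeftCentralizers 𝕜 A) (a : A), πb L * π a = π ((L : A →L[𝕜] A) a)) ∧
      -- and satisfies the SOT statements for every bounded approximate left identity,
      (∀ (κ : Type*) (l' : Filter κ), l'.NeBot → ∀ (e' : κ → A) (m' : ℝ),
        (∀ i, ‖e' i‖ ≤ m') →
        (∀ a : A, Tendsto (fun i => e' i * a) l' (𝓝 a)) →
        (∀ x : X, Tendsto (fun i => π (e' i) x) l' (𝓝 x)) ∧
        (∀ (L : LeftCentralizers 𝕜 A) (x : X),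
          Tendsto (fun i => π ((L : A →L[𝕜] A) (e' i)) x) l' (𝓝 (πb L x)))) ∧
      -- moreover `π̄_l` is the unique such algebra homomorphism:
      (∀ σ : LeftCentralizers 𝕜 A → X →L[𝕜] X,
        ((∀ (L K : LeftCentralizers 𝕜 A)
            (h : (L : A →L[𝕜] A) + K ∈ LeftCentralizers 𝕜 A),
            σ ⟨(L : A →L[𝕜] A) + K, h⟩ = σ L + σ K) ∧
          (∀ (c : 𝕜) (L : LeftCentralizers 𝕜 A)
            (h : c • (L : A →L[𝕜] A) ∈ LeftCentralizers 𝕜 A),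
            σ ⟨c • (L : A →L[𝕜] A), h⟩ = c • σ L) ∧
          (∀ (L K : LeftCentralizers 𝕜 A)
            (h : (L : A →L[𝕜] A) * K ∈ LeftCentralizers 𝕜 A),
            σ ⟨(L : A →L[𝕜] A) * K, h⟩ = σ L * σ K) ∧
          (∀ (a : A) (h : ContinuousLinearMap.mul 𝕜 A a ∈ LeftCentralizers 𝕜 A),
            σ ⟨ContinuousLinearMap.mul 𝕜 A a, h⟩ = π a)) → σ = πb) := by
  have hext : ∀ {S T : X →L[𝕜] X}, (∀ a y, S (π a y) = T (π a y)) → S = T := by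
    intro S T h
    refine ContinuousLinearMap.ext_on hnd ?_
    rintro _ ⟨⟨a, y⟩, rfl⟩
    exact h a y
  have hm : 0 ≤ m := by
    obtain ⟨i0⟩ := l.nonempty_of_neBot
    exact (norm_nonneg _).trans (he_bdd i0)
  have hbase : ∀ {κ : Type _} (l' : Filter κ) (e' : κ → A),
      (∀ a : A, Tendsto (fun i => e' i * a) l' (𝓝 a)) →
      ∀ (L : LeftCentralizers 𝕜 A) (a : A) (y : X),
        Tendsto (fun i => π ((L : A →L[𝕜] A) (e' i)) (π a y)) l'
          (𝓝 (π ((L : A →L[𝕜] A) a) y)) := by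
    intro κ l' e' he L a y
    have h1 : Tendsto (fun i => π ((L : A →L[𝕜] A) (e' i * a)) y) l'
          (𝓝 (π ((L : A →L[𝕜] A) a) y)) := by
      have hc : Continuous fun b => π ((L : A →L[𝕜] A) b) y := by fun_prop
      exact (hc.tendsto a).comp (he a)
    refine h1.congr fun i => ?_
    rw [L.2, hπmul]
    rfl
  have hbase0 : ∀ (L : LeftCentralizers 𝕜 A) (a : A) (y : X),
        Tendsto (fun i => π ((L : A →L[𝕜] A) (e i)) (π a y)) l
          (𝓝 (π ((L : A →L[𝕜] A) a) y)) := by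
    intro L a y
    have h1 : Tendsto (fun i => π ((L : A →L[𝕜] A) (e i * a)) y) l
          (𝓝 (π ((L : A →L[𝕜] A) a) y)) := by
      have hc : Continuous fun b => π ((L : A →L[𝕜] A) b) y := by fun_prop
      exact (hc.tendsto a).comp (he_lim a)
    refine h1.congr fun i => ?_
    rw [L.2, hπmul]
    rfl
  have hbd : ∀ (L : LeftCentralizers 𝕜 A) (b : A) (C : ℝ), ‖b‖ ≤ C →
      ‖π ((L : A →L[𝕜] A) b)‖ ≤ C * ‖π‖ * ‖(L : A →L[𝕜] A)‖ := by
    intro L b C hb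
    calc ‖π ((L : A →L[𝕜] A) b)‖ ≤ ‖π‖ * (‖(L : A →L[𝕜] A)‖ * ‖b‖) :=
          (π.le_opNorm _).trans (by gcongr; exact (L : A →L[𝕜] A).le_opNorm b)
      _ ≤ ‖π‖ * (‖(L : A →L[𝕜] A)‖ * C) := by gcongr
      _ = _ := by ring
  have hex : ∀ L : LeftCentralizers 𝕜 A, ∃ S : X →L[𝕜] X,
      ‖S‖ ≤ m * ‖π‖ * ‖(L : A →L[𝕜] A)‖ ∧ ∀ a y, S (π a y) = π ((L : A →L[𝕜] A) a) y := by
    intro L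
    obtain ⟨S, hS, hS'⟩ := lcm_aux l (fun i => π ((L : A →L[𝕜] A) (e i))) _
      (fun i => hbd L (e i) m (he_bdd i)) _ hnd (by
        rintro _ ⟨⟨a, y⟩, rfl⟩
        exact ⟨_, hbase0 L a y⟩)
    exact ⟨S, hS, fun a y => tendsto_nhds_unique (hS' _) (hbase0 L a y)⟩
  choose πb hn hπb using hex
  have hone : (1 : A →L[𝕜] A) ∈ LeftCentralizers 𝕜 A := fun a b => rfl
  have hlam : ∀ a, ContinuousLinearMap.mul 𝕜 A a ∈ LeftCentralizers 𝕜 A := fun a b c => by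
    simp [mul_assoc]
  have hπ1 : ∀ h : (1 : A →L[𝕜] A) ∈ LeftCentralizers 𝕜 A, πb ⟨1, h⟩ = 1 := fun h =>
    hext fun a y => by rw [hπb]; rfl
  refine ⟨πb, ⟨?_, ?_, ?_, ?_⟩, hπ1, hn, ?_, ?_, ?_, ?_⟩
  · intro L K h
    refine hext fun a y => ?_
    rw [ContinuousLinearMap.add_apply, hπb, hπb, hπb]
    simp
  · intro c L h
    refine hext fun a y => ?_
    rw [ContinuousLinearMap.smul_apply, hπb, hπb]
    simp
  · intro L K h
    refine hext fun a y => ?_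
    rw [ContinuousLinearMap.mul_apply, hπb, hπb, hπb]
    rfl
  · intro b h
    refine hext fun a y => ?_
    rw [hπb, ContinuousLinearMap.mul_apply', hπmul]
    rfl
  · refine dense_univ.mono fun x _ => Submodule.subset_span ⟨(⟨1, hone⟩, x), ?_⟩
    simp [hπ1]
  · intro L a
    ext y
    exact hπb L a y
  · intro κ l' hl e' m' hb he
    have key : ∀ (L : LeftCentralizers 𝕜 A) (x : X),
          Tendsto (fun i => π ((L : A →L[𝕜] A) (e' i)) x) l' (𝓝 (πb L x)) := by
      intro L
      obtain ⟨S, hS, hS'⟩ := lcm_aux l' (fun i => π ((L : A →L[𝕜] A) (e' i))) _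
        (fun i => hbd L (e' i) m' (hb i)) _ hnd (by
          rintro _ ⟨⟨a, y⟩, rfl⟩
          exact ⟨_, hbase l' e' he L a y⟩)
      have : S = πb L := hext fun a y => by
        rw [hπb]
        exact tendsto_nhds_unique (hS' _) (hbase l' e' he L a y)
      rwa [this] at hS'
    refine ⟨fun x => ?_, key⟩
    have := key ⟨1, hone⟩ x
    rw [hπ1] at this
    exact this
  · rintro σ ⟨-, -, hmul, hl⟩
    funext L
    refine hext fun a y => ?_
    have e1 : (L : A →L[𝕜] A) * ContinuousLinearMap.mul 𝕜 A a
        = ContinuousLinearMap.mul 𝕜 A ((L : A →L[𝕜] A) a) := by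
      ext b
      exact L.2 a b
    have e2 := hmul L ⟨_, hlam a⟩ (by rw [e1]; exact hlam _)
    simp only [e1] at e2
    rw [hl, hl] at e2
    rw [hπb, e2]
    rfl
end

section
/- Let A be a normed algebra with an m-bounded approximate right identity, let X be a Banach space, and let π_r : A → B(X) be a bounded algebra anti-homomorphism making X a non-degenerate normed right A-module. Then there exists a unique algebra HOMOMORPHISM π̄_r : M_r(A) → B(X) such that π̄_r ∘ ρ = π_r, where ρ : A → M_r(A) is the canonical anti-homomorphism. This π̄_r is unital and bounded with ‖π̄_r‖ ≤ m‖π_r‖, so X becomes a non-degenerate normed LEFT M_r(A)-module; moreover π̄_r(R)π_r(a) = π_r(R(a)) for all R ∈ M_r(A), a ∈ A, and for any bounded approximate right identity (e_i) of A one has π_r(e_i) → id_X and π̄_r(R) = lim_i π_r(R(e_i)) in the strong operator topology. -/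
open Filter Topology

/-- A right centralizer of a normed algebra `A`: a bounded operator `R` on `A` with
`R(ab) = aR(b)`. The right centralizer algebra `M_r(A)` is the set of all of these. -/
def RightCentralizers (𝕜 : Type*) (A : Type*) [RCLike 𝕜] [NonUnitalNormedRing A]
    [NormedSpace 𝕜 A] [IsScalarTower 𝕜 A A] [SMulCommClass 𝕜 A A] :
    Set (A →L[𝕜] A) :=
  {R | ∀ a b : A, R (a * b) = a * R b}

theorem rc_aux_lim {𝕜 : Type*} [RCLike 𝕜] {X : Type*} [NormedAddCommGroup X] [NormedSpace 𝕜 X]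
    [CompleteSpace X] {κ : Type*} (l : Filter κ) [l.NeBot] (T : κ → X →L[𝕜] X) (C : ℝ)
    (hC : ∀ i, ‖T i‖ ≤ C) (G : Set X) (hG : Dense (Submodule.span 𝕜 G : Set X))
    (hT : ∀ g ∈ G, ∃ y, Tendsto (fun i => T i g) l (𝓝 y)) :
    ∃ S : X →L[𝕜] X, (∀ x, Tendsto (fun i => T i x) l (𝓝 (S x))) ∧ ‖S‖ ≤ C := by
  have hC0 : 0 ≤ C := by
    obtain ⟨i⟩ := l.nonempty_of_neBot
    exact (norm_nonneg _).trans (hC i)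
  have h1 : ∀ y ∈ Submodule.span 𝕜 G, ∃ z, Tendsto (fun i => T i y) l (𝓝 z) := by
    intro y hy
    induction hy using Submodule.span_induction with
    | mem x hx => exact hT x hx
    | zero => exact ⟨0, by simp⟩
    | add x y _ _ hx hy =>
      obtain ⟨a, ha⟩ := hx
      obtain ⟨b, hb⟩ := hy
      exact ⟨a + b, by simpa using ha.add hb⟩
    | smul c x _ hx =>
      obtain ⟨a, ha⟩ := hx
      exact ⟨c • a, by simpa using ha.const_smul c⟩
  have h2 : ∀ x, ∃ z, Tendsto (fun i => T i x) l (𝓝 z) := by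
    intro x
    apply cauchy_map_iff_exists_tendsto.1
    rw [Metric.cauchy_iff]
    refine ⟨inferInstance, fun ε hε => ?_⟩
    have hδ : 0 < ε / (4 * (C + 1)) := by positivity
    obtain ⟨y, hy, hxy⟩ := Metric.mem_closure_iff.1 (hG x) _ hδ
    obtain ⟨z, hz⟩ := h1 y hy
    have hb : ∀ i, dist (T i x) (T i y) < ε / 4 := by
      intro i
      rw [dist_eq_norm, ← map_sub]
      rw [dist_eq_norm] at hxy
      calc ‖T i (x - y)‖ ≤ ‖T i‖ * ‖x - y‖ := (T i).le_opNorm _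
        _ ≤ (C + 1) * ‖x - y‖ := by gcongr; linarith [hC i]
        _ < (C + 1) * (ε / (4 * (C + 1))) := by gcongr
        _ = ε / 4 := by field_simp
    have hz' := Metric.tendsto_nhds.1 hz (ε / 4) (by positivity)
    refine ⟨Metric.ball z (ε / 2), ?_, ?_⟩
    · rw [mem_map]
      filter_upwards [hz'] with i hi
      have := dist_triangle (T i x) (T i y) z
      have := hb i
      simp only [Set.mem_preimage, Metric.mem_ball]
      linarith
    · intro a ha b hb
      rw [Metric.mem_ball] at ha hb
      have := dist_triangle_right a b z
      linarith
  choose f hf using h2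
  have hbd : ∀ x, ‖f x‖ ≤ C * ‖x‖ := fun x =>
    le_of_tendsto (hf x).norm (Eventually.of_forall fun i =>
      ((T i).le_opNorm x).trans (by gcongr; exact hC i))
  let L : X →ₗ[𝕜] X :=
    { toFun := f
      map_add' := fun x y => tendsto_nhds_unique (hf (x + y)) (by simpa using (hf x).add (hf y))
      map_smul' := fun c x => tendsto_nhds_unique (hf (c • x))
        (by simpa using (hf x).const_smul c) }
  exact ⟨L.mkContinuous C hbd, hf, L.mkContinuous_norm_le hC0 hbd⟩

theorem rc_aux_gen {𝕜 : Type*} [RCLike 𝕜]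
    {A : Type*} [NonUnitalNormedRing A] [NormedSpace 𝕜 A]
    [IsScalarTower 𝕜 A A] [SMulCommClass 𝕜 A A]
    {X : Type*} [NormedAddCommGroup X] [NormedSpace 𝕜 X] [CompleteSpace X]
    (π : A →L[𝕜] X →L[𝕜] X)
    (hπmul : ∀ a b : A, π (a * b) = π b * π a)
    (hnd : Dense (Submodule.span 𝕜 (Set.range fun p : A × X => π p.1 p.2) : Set X))
    {κ : Type*} (l : Filter κ) [l.NeBot] (e : κ → A) (m : ℝ)
    (he_bdd : ∀ i, ‖e i‖ ≤ m)
    (he_lim : ∀ a : A, Tendsto (fun i => a * e i) l (𝓝 a))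
    (R : RightCentralizers 𝕜 A) : ∃ S : X →L[𝕜] X,
      (∀ x, Tendsto (fun i => π ((R : A →L[𝕜] A) (e i)) x) l (𝓝 (S x))) ∧
      ‖S‖ ≤ m * ‖π‖ * ‖(R : A →L[𝕜] A)‖ ∧ ∀ a, S * π a = π ((R : A →L[𝕜] A) a) := by
  obtain ⟨R, hR⟩ := R
  have hR' : ∀ a b : A, R (a * b) = a * R b := hR
  have key : ∀ a x, Tendsto (fun i => π (R (e i)) (π a x)) l (𝓝 (π (R a) x)) := by
    intro a x
    have h1 : Tendsto (fun i => π (R (a * e i)) x) l (𝓝 (π (R a) x)) := by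
      have hc : Continuous fun b : A => π (R b) x := by fun_prop
      exact (hc.tendsto a).comp (he_lim a)
    refine h1.congr fun i => ?_
    rw [hR', hπmul]
    rfl
  obtain ⟨S, hS, hn⟩ := rc_aux_lim l (fun i => π (R (e i))) (m * ‖π‖ * ‖R‖) (fun i => by
    calc ‖π (R (e i))‖ ≤ ‖π‖ * ‖R (e i)‖ := π.le_opNorm _
      _ ≤ ‖π‖ * (‖R‖ * ‖e i‖) := by gcongr; exact R.le_opNorm _
      _ ≤ ‖π‖ * (‖R‖ * m) := by gcongr; exact he_bdd i
      _ = m * ‖π‖ * ‖R‖ := by ring) _ hnd (by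
    rintro _ ⟨⟨a, x⟩, rfl⟩
    exact ⟨_, key a x⟩)
  refine ⟨S, hS, hn, fun a => ?_⟩
  ext x
  exact tendsto_nhds_unique (hS (π a x)) (key a x)

/-- **Module structures for the right centralizer algebra.** Let `A` be a normed algebra with
an `m`-bounded approximate right identity, `X` a Banach space, and let the bounded algebra
anti-homomorphism `π_r : A → B(X)` make `X` a non-degenerate normed right `A`-module. Then
there is a unique algebra HOMOMORPHISM `π̄_r : M_r(A) → B(X)` with `π̄_r ∘ ρ = π_r` (where
`ρ(a)b = ba`); it is unital and bounded with `‖π̄_r‖ ≤ m‖π_r‖`, so `X` becomes a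
non-degenerate normed LEFT `M_r(A)`-module; moreover `π̄_r(R)π_r(a) = π_r(R(a))`, and for any
bounded approximate right identity `(e_i)` of `A` one has `π_r(e_i) → id_X` and
`π̄_r(R) = SOT-lim π_r(R(e_i))`. -/
theorem right_centralizer_module
    {𝕜 : Type*} [RCLike 𝕜]
    {A : Type*} [NonUnitalNormedRing A] [NormedSpace 𝕜 A]
    [IsScalarTower 𝕜 A A] [SMulCommClass 𝕜 A A]
    {X : Type*} [NormedAddCommGroup X] [NormedSpace 𝕜 X] [CompleteSpace X]
    (m : ℝ) {ι : Type*} (l : Filter ι) [l.NeBot] (e : ι → A)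
    (he_bdd : ∀ i, ‖e i‖ ≤ m)
    (he_lim : ∀ a : A, Tendsto (fun i => a * e i) l (𝓝 a))
    (π : A →L[𝕜] X →L[𝕜] X)
    (hπmul : ∀ a b : A, π (a * b) = π b * π a)
    (hnd : Dense (Submodule.span 𝕜 (Set.range fun p : A × X => π p.1 p.2) : Set X)) :
    ∃ πb : RightCentralizers 𝕜 A → X →L[𝕜] X,
      -- `π̄_r` is an algebra homomorphism with `π̄_r ∘ ρ = π_r` ...
      ((∀ (R S : RightCentralizers 𝕜 A) (h : (R : A →L[𝕜] A) + S ∈ RightCentralizers 𝕜 A),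
          πb ⟨(R : A →L[𝕜] A) + S, h⟩ = πb R + πb S) ∧
        (∀ (c : 𝕜) (R : RightCentralizers 𝕜 A)
          (h : c • (R : A →L[𝕜] A) ∈ RightCentralizers 𝕜 A),
          πb ⟨c • (R : A →L[𝕜] A), h⟩ = c • πb R) ∧
        (∀ (R S : RightCentralizers 𝕜 A)
          (h : (R : A →L[𝕜] A) * S ∈ RightCentralizers 𝕜 A),
          πb ⟨(R : A →L[𝕜] A) * S, h⟩ = πb R * πb S) ∧
        (∀ (a : A) (h : (ContinuousLinearMap.mul 𝕜 A).flip a ∈ RightCentralizers 𝕜 A),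
          πb ⟨(ContinuousLinearMap.mul 𝕜 A).flip a, h⟩ = π a)) ∧
      -- ... which is unital,
      (∀ h : (1 : A →L[𝕜] A) ∈ RightCentralizers 𝕜 A, πb ⟨1, h⟩ = 1) ∧
      -- bounded with `‖π̄_r‖ ≤ m ‖π_r‖`,
      (∀ R : RightCentralizers 𝕜 A, ‖πb R‖ ≤ m * ‖π‖ * ‖(R : A →L[𝕜] A)‖) ∧
      -- makes `X` a non-degenerate normed left `M_r(A)`-module,
      Dense (Submodule.span 𝕜
        (Set.range fun p : RightCentralizers 𝕜 A × X => πb p.1 p.2) : Set X) ∧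
      -- satisfies `π̄_r(R) π_r(a) = π_r(R(a))` (so `π_r(A)` is a left ideal in the image),
      (∀ (R : RightCentralizers 𝕜 A) (a : A), πb R * π a = π ((R : A →L[𝕜] A) a)) ∧
      -- and satisfies the SOT statements for every bounded approximate right identity,
      (∀ (κ : Type*) (l' : Filter κ), l'.NeBot → ∀ (e' : κ → A) (m' : ℝ),
        (∀ i, ‖e' i‖ ≤ m') →
        (∀ a : A, Tendsto (fun i => a * e' i) l' (𝓝 a)) →
        (∀ x : X, Tendsto (fun i => π (e' i) x) l' (𝓝 x)) ∧
        (∀ (R : RightCentralizers 𝕜 A) (x : X),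
          Tendsto (fun i => π ((R : A →L[𝕜] A) (e' i)) x) l' (𝓝 (πb R x)))) ∧
      -- moreover `π̄_r` is the unique such algebra homomorphism:
      (∀ σ : RightCentralizers 𝕜 A → X →L[𝕜] X,
        ((∀ (R S : RightCentralizers 𝕜 A)
            (h : (R : A →L[𝕜] A) + S ∈ RightCentralizers 𝕜 A),
            σ ⟨(R : A →L[𝕜] A) + S, h⟩ = σ R + σ S) ∧
          (∀ (c : 𝕜) (R : RightCentralizers 𝕜 A)
            (h : c • (R : A →L[𝕜] A) ∈ RightCentralizers 𝕜 A),
            σ ⟨c • (R : A →L[𝕜] A), h⟩ = c • σ R) ∧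
          (∀ (R S : RightCentralizers 𝕜 A)
            (h : (R : A →L[𝕜] A) * S ∈ RightCentralizers 𝕜 A),
            σ ⟨(R : A →L[𝕜] A) * S, h⟩ = σ R * σ S) ∧
          (∀ (a : A) (h : (ContinuousLinearMap.mul 𝕜 A).flip a ∈ RightCentralizers 𝕜 A),
            σ ⟨(ContinuousLinearMap.mul 𝕜 A).flip a, h⟩ = π a)) → σ = πb) := by
  have hext : ∀ S T : X →L[𝕜] X, (∀ a, S * π a = T * π a) → S = T := by
    intro S T h
    apply ContinuousLinearMap.ext_on hnd
    rintro _ ⟨⟨a, x⟩, rfl⟩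
    exact DFunLike.congr_fun (h a) x
  have hρ : ∀ a : A, (ContinuousLinearMap.mul 𝕜 A).flip a ∈ RightCentralizers 𝕜 A := by
    intro a b c
    simp [mul_assoc]
  have h1mem : (1 : A →L[𝕜] A) ∈ RightCentralizers 𝕜 A := fun a b => rfl
  choose πb hlim hnorm hmod using rc_aux_gen π hπmul hnd l e m he_bdd he_lim
  have hone : ∀ h : (1 : A →L[𝕜] A) ∈ RightCentralizers 𝕜 A, πb ⟨1, h⟩ = 1 := by
    intro h
    refine hext _ _ fun a => ?_
    rw [hmod, one_mul]
    rfl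
  refine ⟨πb, ⟨?_, ?_, ?_, ?_⟩, hone, hnorm, ?_, hmod, ?_, ?_⟩
  · intro R S h
    refine hext _ _ fun a => ?_
    rw [hmod, add_mul, hmod, hmod, ← map_add]
    rfl
  · intro c R h
    refine hext _ _ fun a => ?_
    rw [hmod, smul_mul_assoc, hmod, ← map_smul]
    rfl
  · intro R S h
    refine hext _ _ fun a => ?_
    rw [hmod, mul_assoc, hmod, hmod]
    rfl
  · intro a h
    refine hext _ _ fun b => ?_
    rw [hmod, ← hπmul]
    rfl
  · refine dense_univ.mono fun x _ => Submodule.subset_span ⟨(⟨1, h1mem⟩, x), ?_⟩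
    simp [hone]
  · intro κ l' hl' e' m' hb hl
    have hR : ∀ (R : RightCentralizers 𝕜 A) (x : X),
          Tendsto (fun i => π ((R : A →L[𝕜] A) (e' i)) x) l' (𝓝 (πb R x)) := by
      intro R
      obtain ⟨S, hS, _, hm⟩ := rc_aux_gen π hπmul hnd l' e' m' hb hl R
      have : S = πb R := hext _ _ fun a => by rw [hm, hmod]
      rwa [← this]
    refine ⟨fun x => ?_, hR⟩
    have := hR ⟨1, h1mem⟩ x
    rw [hone] at this
    exact this
  · rintro σ ⟨-, -, hmul, hσ⟩
    funext R
    refine hext _ _ fun a => ?_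
    have heq : (R : A →L[𝕜] A) * (ContinuousLinearMap.mul 𝕜 A).flip a
        = (ContinuousLinearMap.mul 𝕜 A).flip ((R : A →L[𝕜] A) a) := by
      ext b
      exact R.2 b a
    have h2 := hmul R ⟨_, hρ a⟩ (by rw [heq]; exact hρ _)
    rw [hσ a] at h2
    rw [← h2, hmod, ← hσ _ (hρ _)]
    congr 1
    exact Subtype.ext heq
end

section
/- Let A be a normed algebra with an m-bounded approximate left identity, let X be a Banach space, and let π_l : A → B(X) be a bounded algebra homomorphism making X a non-degenerate normed left A-module. Then π̄_l ∘ φ_l : M(A) → B(X) is the unique algebra homomorphism α : M(A) → B(X) with α ∘ δ = π_l, where δ : A → M(A) is the canonical homomorphism. It is unital and bounded with ‖π̄_l ∘ φ_l‖ ≤ m‖π_l‖, making X a non-degenerate normed left M(A)-module; π_l(A) is a two-sided ideal in (π̄_l∘φ_l)(M(A)), with (π̄_l∘φ_l)((L,R))π_l(a) = π_l(L(a)) and π_l(a)(π̄_l∘φ_l)((L,R)) = π_l(R(a)) for all (L,R) ∈ M(A), a ∈ A; and for any bounded approximate left identity (e_i) of A, (π̄_l∘φ_l)((L,R)) = lim_i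 π_l(L(e_i)) in the strong operator topology. -/
open Filter Topology

/-- `(L, R)` is a double centralizer of `A`: `L ∈ M_l(A)`, `R ∈ M_r(A)`, and
`a L(b) = R(a) b` for all `a, b ∈ A`. -/
def IsDoubleCentralizer (𝕜 : Type*) {A : Type*} [RCLike 𝕜] [NonUnitalNormedRing A]
    [NormedSpace 𝕜 A] [IsScalarTower 𝕜 A A] [SMulCommClass 𝕜 A A]
    (L R : A →L[𝕜] A) : Prop :=
  L ∈ LeftCentralizers 𝕜 A ∧ R ∈ RightCentralizers 𝕜 A ∧ ∀ a b : A, a * L b = R a * b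

theorem tendsto_id_aux {𝕜 X κ : Type*} [RCLike 𝕜] [NormedAddCommGroup X] [NormedSpace 𝕜 X]
    (l : Filter κ) (T : κ → X →L[𝕜] X) (C : ℝ) (hC : ∀ i, ‖T i‖ ≤ C) (S : Set X)
    (hS : ∀ x ∈ S, Tendsto (fun i => T i x) l (𝓝 x))
    (hd : Dense (Submodule.span 𝕜 S : Set X)) (x : X) :
    Tendsto (fun i => T i x) l (𝓝 x) := by
  have h1 : ∀ y ∈ Submodule.span 𝕜 S, Tendsto (fun i => T i y) l (𝓝 y) := by
    intro y hy
    induction hy using Submodule.span_induction with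
    | mem y hy => exact hS y hy
    | zero => simpa using tendsto_const_nhds
    | add a b _ _ ha hb => simpa using ha.add hb
    | smul c a _ ha => simpa using ha.const_smul c
  rw [Metric.tendsto_nhds]
  intro ε hε
  have hK : 0 < |C| + 2 := by positivity
  obtain ⟨y, hy, hxy⟩ := hd.exists_dist_lt x (div_pos hε hK)
  filter_upwards [(Metric.tendsto_nhds.1 (h1 y hy)) (ε / (|C| + 2)) (div_pos hε hK)] with i hi
  rw [dist_eq_norm] at hi hxy ⊢
  have e1 : T i x - x = T i (x - y) + (T i y - y) - (x - y) := by
    rw [map_sub]; abel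
  have h2 : ‖T i (x - y)‖ ≤ |C| * ‖x - y‖ :=
    (T i).le_of_opNorm_le ((hC i).trans (le_abs_self C)) _
  have h3 : |C| * ‖x - y‖ ≤ |C| * (ε / (|C| + 2)) := by gcongr
  have h4 : |C| * (ε / (|C| + 2)) + ε / (|C| + 2) + ε / (|C| + 2) = ε := by
    field_simp; ring
  calc ‖T i x - x‖ ≤ ‖T i (x - y)‖ + ‖T i y - y‖ + ‖x - y‖ := by
        rw [e1]; exact (norm_sub_le _ _).trans (by gcongr; exact norm_add_le _ _)
    _ < ε := by linarith

/-- **Module structures for the double centralizer algebra: the left-sided case.** Let `A` be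
a normed algebra with an `m`-bounded approximate left identity, `X` a Banach space, and
`π_l : A → B(X)` a bounded homomorphism making `X` a non-degenerate normed left `A`-module,
and let `π̄_l : M_l(A) → B(X)` be the canonical homomorphism with `π̄_l ∘ λ = π_l`. Then
`π̄_l ∘ φ_l : M(A) → B(X)` is the unique algebra homomorphism `α` with `α ∘ δ = π_l`; it is
unital and bounded with norm at most `m‖π_l‖`, makes `X` a non-degenerate normed left
`M(A)`-module, satisfies `(π̄_l∘φ_l)(L,R) π_l(a) = π_l(L(a))` and
`π_l(a) (π̄_l∘φ_l)(L,R) = π_l(R(a))` (so `π_l(A)` is a two-sided ideal in the image), and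
`(π̄_l∘φ_l)(L,R) = SOT-lim π_l(L(e_i))` for every bounded approximate left identity. -/
theorem double_centralizer_module_left
    {𝕜 : Type*} [RCLike 𝕜]
    {A : Type*} [NonUnitalNormedRing A] [NormedSpace 𝕜 A]
    [IsScalarTower 𝕜 A A] [SMulCommClass 𝕜 A A]
    {X : Type*} [NormedAddCommGroup X] [NormedSpace 𝕜 X] [CompleteSpace X]
    (m : ℝ) {ι : Type*} (l : Filter ι) [l.NeBot] (e : ι → A)
    (he_bdd : ∀ i, ‖e i‖ ≤ m)
    (he_lim : ∀ a : A, Tendsto (fun i => e i * a) l (𝓝 a))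
    (π : A →L[𝕜] X →L[𝕜] X)
    (hπmul : ∀ a b : A, π (a * b) = π a * π b)
    (hnd : Dense (Submodule.span 𝕜 (Set.range fun p : A × X => π p.1 p.2) : Set X))
    -- `π̄_l : M_l(A) → B(X)`, the canonical homomorphism with `π̄_l ∘ λ = π_l`
    (πbl : LeftCentralizers 𝕜 A → X →L[𝕜] X)
    (hπbl_add : ∀ (L K : LeftCentralizers 𝕜 A)
      (h : (L : A →L[𝕜] A) + K ∈ LeftCentralizers 𝕜 A),
      πbl ⟨(L : A →L[𝕜] A) + K, h⟩ = πbl L + πbl K)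
    (hπbl_smul : ∀ (c : 𝕜) (L : LeftCentralizers 𝕜 A)
      (h : c • (L : A →L[𝕜] A) ∈ LeftCentralizers 𝕜 A),
      πbl ⟨c • (L : A →L[𝕜] A), h⟩ = c • πbl L)
    (hπbl_mul : ∀ (L K : LeftCentralizers 𝕜 A)
      (h : (L : A →L[𝕜] A) * K ∈ LeftCentralizers 𝕜 A),
      πbl ⟨(L : A →L[𝕜] A) * K, h⟩ = πbl L * πbl K)
    (hπbl_lam : ∀ (a : A) (h : ContinuousLinearMap.mul 𝕜 A a ∈ LeftCentralizers 𝕜 A),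
      πbl ⟨ContinuousLinearMap.mul 𝕜 A a, h⟩ = π a) :
    -- `π̄_l ∘ φ_l` (i.e. `(L,R) ↦ π̄_l(L)`) is the unique homomorphism `α` with `α ∘ δ = π_l`:
    (∀ β : (A →L[𝕜] A) → (A →L[𝕜] A) → (X →L[𝕜] X),
      (∀ L R L' R' : A →L[𝕜] A, IsDoubleCentralizer 𝕜 L R → IsDoubleCentralizer 𝕜 L' R' →
        β (L + L') (R + R') = β L R + β L' R') →
      (∀ (c : 𝕜) (L R : A →L[𝕜] A), IsDoubleCentralizer 𝕜 L R →
        β (c • L) (c • R) = c • β L R) →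
      (∀ L R L' R' : A →L[𝕜] A, IsDoubleCentralizer 𝕜 L R → IsDoubleCentralizer 𝕜 L' R' →
        β (L * L') (R' * R) = β L R * β L' R') →
      (∀ a : A, β (ContinuousLinearMap.mul 𝕜 A a) ((ContinuousLinearMap.mul 𝕜 A).flip a)
        = π a) →
      ∀ (L R : A →L[𝕜] A) (hDC : IsDoubleCentralizer 𝕜 L R), β L R = πbl ⟨L, hDC.1⟩) ∧
    -- it is unital,
    (∀ h : (1 : A →L[𝕜] A) ∈ LeftCentralizers 𝕜 A, πbl ⟨1, h⟩ = 1) ∧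
    -- bounded with `‖π̄_l ∘ φ_l‖ ≤ m ‖π_l‖` for the norm `max(‖L‖, ‖R‖)` on `M(A)`,
    (∀ (L R : A →L[𝕜] A) (hDC : IsDoubleCentralizer 𝕜 L R),
      ‖πbl ⟨L, hDC.1⟩‖ ≤ m * ‖π‖ * max ‖L‖ ‖R‖) ∧
    -- makes `X` a non-degenerate normed left `M(A)`-module,
    Dense (Submodule.span 𝕜 {y : X | ∃ (L R : A →L[𝕜] A)
      (hDC : IsDoubleCentralizer 𝕜 L R) (x : X), πbl ⟨L, hDC.1⟩ x = y} : Set X) ∧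
    -- `π_l(A)` is a two-sided ideal in the image:
    (∀ (L R : A →L[𝕜] A) (hDC : IsDoubleCentralizer 𝕜 L R) (a : A),
      πbl ⟨L, hDC.1⟩ * π a = π (L a) ∧ π a * πbl ⟨L, hDC.1⟩ = π (R a)) ∧
    -- SOT formula for every bounded approximate left identity:
    (∀ (κ : Type*) (l' : Filter κ), l'.NeBot → ∀ (e' : κ → A) (m' : ℝ),
      (∀ i, ‖e' i‖ ≤ m') →
      (∀ a : A, Tendsto (fun i => e' i * a) l' (𝓝 a)) →
      ∀ (L R : A →L[𝕜] A) (hDC : IsDoubleCentralizer 𝕜 L R) (x : X),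
        Tendsto (fun i => π (L (e' i)) x) l' (𝓝 (πbl ⟨L, hDC.1⟩ x))) := by
  have hext : ∀ S T : X →L[𝕜] X, (∀ a, S * π a = T * π a) → S = T := by
    intro S T h
    refine ContinuousLinearMap.ext_on hnd ?_
    rintro _ ⟨⟨a, x⟩, rfl⟩
    exact DFunLike.congr_fun (h a) x
  have hmulmem : ∀ a : A, ContinuousLinearMap.mul 𝕜 A a ∈ LeftCentralizers 𝕜 A := by
    intro a b c
    simp [mul_assoc]
  have hK1 : ∀ (L : A →L[𝕜] A) (hL : L ∈ LeftCentralizers 𝕜 A) (a : A),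
      πbl ⟨L, hL⟩ * π a = π (L a) := by
    intro L hL a
    have e1 : L * ContinuousLinearMap.mul 𝕜 A a = ContinuousLinearMap.mul 𝕜 A (L a) := by
      ext b
      simpa using hL a b
    have h := hπbl_mul ⟨L, hL⟩ ⟨_, hmulmem a⟩ (by rw [e1]; exact hmulmem _)
    rw [hπbl_lam] at h
    rw [← h, ← hπbl_lam (L a) (hmulmem _)]
    congr 1
    exact Subtype.ext e1
  have hK2 : ∀ (L R : A →L[𝕜] A) (hDC : IsDoubleCentralizer 𝕜 L R) (a : A),
      π a * πbl ⟨L, hDC.1⟩ = π (R a) := by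
    intro L R hDC a
    refine hext _ _ fun b => ?_
    rw [mul_assoc, hK1, ← hπmul, ← hπmul, hDC.2.2]
  have hone : ∀ h : (1 : A →L[𝕜] A) ∈ LeftCentralizers 𝕜 A, πbl ⟨1, h⟩ = 1 := by
    intro h
    refine hext _ _ fun a => ?_
    rw [hK1, one_mul]
    rfl
  have hsot2 : ∀ (L : A →L[𝕜] A) (hL : L ∈ LeftCentralizers 𝕜 A) (x : X),
        Tendsto (fun i => π (L (e i)) x) l (𝓝 (πbl ⟨L, hL⟩ x)) := by
    intro L hL x
    have h := tendsto_id_aux l (fun i => π (e i)) (‖π‖ * m)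
      (fun i => π.le_opNorm_of_le (he_bdd i)) _ (by
        rintro _ ⟨⟨a, y⟩, rfl⟩
        have h2 := ((π.flip y).continuous.tendsto a).comp (he_lim a)
        refine h2.congr fun i => ?_
        simp [hπmul]) hnd x
    refine (((πbl ⟨L, hL⟩).continuous.tendsto x).comp h).congr fun i => ?_
    rw [← hK1 L hL]
    rfl
  refine ⟨?_, hone, ?_, ?_, fun L R hDC a => ⟨hK1 L hDC.1 a, hK2 L R hDC a⟩, ?_⟩
  · intro β _ _ hmul hβ L R hDC
    refine hext _ _ fun a => ?_
    have hd : IsDoubleCentralizer 𝕜 (ContinuousLinearMap.mul 𝕜 A a)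
        ((ContinuousLinearMap.mul 𝕜 A).flip a) := by
      refine ⟨hmulmem a, fun b c => ?_, fun b c => ?_⟩ <;> simp [mul_assoc]
    have e1 : L * ContinuousLinearMap.mul 𝕜 A a = ContinuousLinearMap.mul 𝕜 A (L a) := by
      ext b
      simpa using hDC.1 a b
    have e2 : (ContinuousLinearMap.mul 𝕜 A).flip a * R
        = (ContinuousLinearMap.mul 𝕜 A).flip (L a) := by
      ext b
      simpa using (hDC.2.2 b a).symm
    rw [hK1, ← hβ a, ← hmul L R _ _ hDC hd, e1, e2, hβ]
  · intro L R hDC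
    obtain ⟨i⟩ := l.nonempty_of_neBot
    have hm : 0 ≤ m := (norm_nonneg _).trans (he_bdd i)
    refine ContinuousLinearMap.opNorm_le_bound _ (by positivity) fun x => ?_
    refine le_of_tendsto (hsot2 L hDC.1 x).norm (Eventually.of_forall fun i => ?_)
    calc ‖π (L (e i)) x‖ ≤ ‖π‖ * ‖L (e i)‖ * ‖x‖ := π.le_opNorm₂ _ _
      _ ≤ ‖π‖ * (‖L‖ * m) * ‖x‖ := by
        gcongr
        exact L.le_opNorm_of_le (he_bdd i)
      _ = m * ‖π‖ * ‖L‖ * ‖x‖ := by ring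
      _ ≤ m * ‖π‖ * max ‖L‖ ‖R‖ * ‖x‖ := by
        gcongr
        exact le_max_left _ _
  · have hd : IsDoubleCentralizer 𝕜 (1 : A →L[𝕜] A) (1 : A →L[𝕜] A) :=
      ⟨fun a b => rfl, fun a b => rfl, fun a b => rfl⟩
    refine dense_univ.mono fun x _ => Submodule.subset_span ⟨1, 1, hd, x, ?_⟩
    rw [hone]
    rfl
  · intro κ l' _ e' m' hb hl L R hDC x
    have hL := hDC.1
    have h := tendsto_id_aux l' (fun i => π (e' i)) (‖π‖ * m')
      (fun i => π.le_opNorm_of_le (hb i)) _ (by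
        rintro _ ⟨⟨a, y⟩, rfl⟩
        have h2 := ((π.flip y).continuous.tendsto a).comp (hl a)
        refine h2.congr fun i => ?_
        simp [hπmul]) hnd x
    refine (((πbl ⟨L, hL⟩).continuous.tendsto x).comp h).congr fun i => ?_
    rw [← hK1 L hL]
    rfl
end

section
/- Let A be a normed algebra over ℂ with a bounded involution and an m-bounded approximate left identity, let H be a complex Hilbert space, and let π_l : A → B(H) be a bounded involutive algebra homomorphism making H a non-degenerate normed left A-module. Then the double centralizer algebra M(A) carries the bounded involution (L,R)* = (R*, L*) (where L*(a) = (L(a*))* and R*(a) = (R(a*))*), the canonical homomorphism δ : A → M(A) is involutive, and the unique homomorphism π̄_l ∘ φ_l : M(A) → B(H) satisfying (π̄_l ∘ φ_l) ∘ δ = π_l is involutive: (π̄_l∘φ_l)((L,R)*) = ((π̄_l∘φ_l)((L,R)))* for all (L,R) ∈ M(A). -/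
open Filter Topology

/-- **The involutive structure on the double centralizer algebra and involutivity of the
compatible Hilbert representation.** Let `A` be a complex normed algebra with a bounded
involution and an `m`-bounded approximate left identity, `H` a complex Hilbert space, and
`π_l : A → B(H)` a bounded involutive homomorphism making `H` a non-degenerate normed left
`A`-module; let `π̄_l : M_l(A) → B(H)` be the canonical homomorphism with `π̄_l ∘ λ = π_l`.
Then `M(A)` carries the bounded involution `(L,R)* = (R*, L*)` (with `L*(a) = (L(a*))*`,
`R*(a) = (R(a*))*`), the canonical homomorphism `δ` is involutive, and `π̄_l ∘ φ_l` is
involutive: `(π̄_l∘φ_l)((L,R)*) = ((π̄_l∘φ_l)((L,R)))*`. -/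
theorem double_centralizer_involutive
    {A : Type*} [NonUnitalNormedRing A] [NormedSpace ℂ A]
    [IsScalarTower ℂ A A] [SMulCommClass ℂ A A]
    [StarRing A] [StarModule ℂ A]
    (C : ℝ) (hstar_bdd : ∀ a : A, ‖star a‖ ≤ C * ‖a‖)
    {H : Type*} [NormedAddCommGroup H] [InnerProductSpace ℂ H] [CompleteSpace H]
    (m : ℝ) {ι : Type*} (l : Filter ι) [l.NeBot] (e : ι → A)
    (he_bdd : ∀ i, ‖e i‖ ≤ m)
    (he_lim : ∀ a : A, Tendsto (fun i => e i * a) l (𝓝 a))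
    (π : A →L[ℂ] H →L[ℂ] H)
    (hπmul : ∀ a b : A, π (a * b) = π a * π b)
    (hπstar : ∀ a : A, π (star a) = ContinuousLinearMap.adjoint (π a))
    (hnd : Dense (Submodule.span ℂ (Set.range fun p : A × H => π p.1 p.2) : Set H))
    -- `π̄_l : M_l(A) → B(H)`, the canonical homomorphism with `π̄_l ∘ λ = π_l`
    (πbl : LeftCentralizers ℂ A → H →L[ℂ] H)
    (hπbl_add : ∀ (L K : LeftCentralizers ℂ A)
      (h : (L : A →L[ℂ] A) + K ∈ LeftCentralizers ℂ A),
      πbl ⟨(L : A →L[ℂ] A) + K, h⟩ = πbl L + πbl K)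
    (hπbl_smul : ∀ (c : ℂ) (L : LeftCentralizers ℂ A)
      (h : c • (L : A →L[ℂ] A) ∈ LeftCentralizers ℂ A),
      πbl ⟨c • (L : A →L[ℂ] A), h⟩ = c • πbl L)
    (hπbl_mul : ∀ (L K : LeftCentralizers ℂ A)
      (h : (L : A →L[ℂ] A) * K ∈ LeftCentralizers ℂ A),
      πbl ⟨(L : A →L[ℂ] A) * K, h⟩ = πbl L * πbl K)
    (hπbl_lam : ∀ (a : A) (h : ContinuousLinearMap.mul ℂ A a ∈ LeftCentralizers ℂ A),
      πbl ⟨ContinuousLinearMap.mul ℂ A a, h⟩ = π a) :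
    -- `M(A)` carries the involution `(L,R)* = (R*, L*)` ...
    (∀ L R : A →L[ℂ] A, IsDoubleCentralizer ℂ L R →
      ∃ Ls Rs : A →L[ℂ] A,
        (∀ a : A, Ls a = star (R (star a))) ∧
        (∀ a : A, Rs a = star (L (star a))) ∧
        IsDoubleCentralizer ℂ Ls Rs) ∧
    -- ... which is a bounded involution,
    (∃ C' : ℝ, ∀ L R : A →L[ℂ] A, IsDoubleCentralizer ℂ L R →
      ∀ Ls Rs : A →L[ℂ] A,
        (∀ a : A, Ls a = star (R (star a))) →
        (∀ a : A, Rs a = star (L (star a))) →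
        max ‖Ls‖ ‖Rs‖ ≤ C' * max ‖L‖ ‖R‖) ∧
    -- `δ : A → M(A)` is involutive,
    (∀ a b : A,
      ContinuousLinearMap.mul ℂ A (star a) b
        = star ((ContinuousLinearMap.mul ℂ A).flip a (star b)) ∧
      (ContinuousLinearMap.mul ℂ A).flip (star a) b
        = star (ContinuousLinearMap.mul ℂ A a (star b))) ∧
    -- and `π̄_l ∘ φ_l : M(A) → B(H)` is involutive.
    (∀ (L R : A →L[ℂ] A) (hDC : IsDoubleCentralizer ℂ L R) (Ls : A →L[ℂ] A)
      (_ : ∀ a : A, Ls a = star (R (star a))) (hLs : Ls ∈ LeftCentralizers ℂ A),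
      πbl ⟨Ls, hLs⟩ = ContinuousLinearMap.adjoint (πbl ⟨L, hDC.1⟩)) := by
  have hs : ∀ a : A, ‖star a‖ ≤ |C| * ‖a‖ := fun a =>
    (hstar_bdd a).trans (mul_le_mul_of_nonneg_right (le_abs_self C) (norm_nonneg a))
  have hb : ∀ (T : A →L[ℂ] A) (a : A), ‖star (T (star a))‖ ≤ (|C| * |C| * ‖T‖) * ‖a‖ := by
    intro T a
    calc ‖star (T (star a))‖ ≤ |C| * ‖T (star a)‖ := hs _
      _ ≤ |C| * (‖T‖ * (|C| * ‖a‖)) := by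
          gcongr
          exact (T.le_opNorm _).trans (by gcongr; exact hs a)
      _ = _ := by ring
  have hex : ∀ T : A →L[ℂ] A, ∃ S : A →L[ℂ] A, ∀ a, S a = star (T (star a)) := by
    intro T
    refine ⟨LinearMap.mkContinuous
      { toFun := fun a => star (T (star a))
        map_add' := fun a b => by simp
        map_smul' := fun c a => by simp [star_smul] } (|C| * |C| * ‖T‖) (hb T), fun a => rfl⟩
  refine ⟨?_, ⟨|C| * |C|, ?_⟩, ?_, ?_⟩
  · rintro L R ⟨hL, hR, hLR⟩
    obtain ⟨Ls, hLs⟩ := hex R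
    obtain ⟨Rs, hRs⟩ := hex L
    refine ⟨Ls, Rs, hLs, hRs, ?_, ?_, ?_⟩
    · intro a b
      rw [hLs, hLs, star_mul, hR, star_mul, star_star]
    · intro a b
      rw [hRs, hRs, star_mul, hL, star_mul, star_star]
    · intro a b
      rw [hLs, hRs]
      have h := congrArg star (hLR (star b) (star a))
      rw [star_mul, star_mul, star_star, star_star] at h
      exact h.symm
  · intro L R _ Ls Rs hLs hRs
    refine max_le ?_ ?_
    · refine (Ls.opNorm_le_bound (M := |C| * |C| * ‖R‖) (by positivity) (fun a => by rw [hLs]; exact hb R a)).trans ?_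
      gcongr
      exact le_max_right _ _
    · refine (Rs.opNorm_le_bound (M := |C| * |C| * ‖L‖) (by positivity) (fun a => by rw [hRs]; exact hb L a)).trans ?_
      gcongr
      exact le_max_left _ _
  · intro a b
    simp [star_mul]
  · intro L R hDC Ls hLs' hLs
    have key : ∀ (K : A →L[ℂ] A) (hK : K ∈ LeftCentralizers ℂ A) (a : A) (x : H),
        πbl ⟨K, hK⟩ (π a x) = π (K a) x := by
      intro K hK a x
      have h1 : ∀ c : A, ContinuousLinearMap.mul ℂ A c ∈ LeftCentralizers ℂ A := by
        intro c a b
        simp [mul_assoc]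
      have h2 : K * ContinuousLinearMap.mul ℂ A a = ContinuousLinearMap.mul ℂ A (K a) := by
        ext b
        exact hK a b
      have h3 : K * ContinuousLinearMap.mul ℂ A a ∈ LeftCentralizers ℂ A := by
        rw [h2]; exact h1 _
      have h4 := hπbl_mul ⟨K, hK⟩ ⟨_, h1 a⟩ h3
      have h5 : (⟨K * ContinuousLinearMap.mul ℂ A a, h3⟩ : LeftCentralizers ℂ A)
        = ⟨ContinuousLinearMap.mul ℂ A (K a), h1 _⟩ := Subtype.ext h2
      rw [hπbl_lam] at h4
      have h6 : π (K a) = πbl ⟨K, hK⟩ * π a := by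
        rw [← h4, ← hπbl_lam (K a) (h1 _)]
        exact (congrArg πbl h5).symm
      rw [h6]; rfl
    refine ContinuousLinearMap.ext_on hnd ?_
    rintro _ ⟨⟨a, x⟩, rfl⟩
    have h : innerSL ℂ (πbl ⟨Ls, hLs⟩ (π a x))
        = innerSL ℂ (ContinuousLinearMap.adjoint (πbl ⟨L, hDC.1⟩) (π a x)) := by
      refine ContinuousLinearMap.ext_on hnd ?_
      rintro _ ⟨⟨b, z⟩, rfl⟩
      simp only [innerSL_apply_apply]
      rw [ContinuousLinearMap.adjoint_inner_left, key, key,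
        ← ContinuousLinearMap.adjoint_inner_right, ← ContinuousLinearMap.adjoint_inner_right,
        ← hπstar, ← hπstar, hLs', star_star]
      have e1 : π (R (star a)) (π b z) = π (star a) (π (L b) z) := by
        have := hπmul (R (star a)) b
        rw [← hDC.2.2, hπmul] at this
        exact (congrArg (fun T : H →L[ℂ] H => T z) this).symm
      rw [e1]
    refine ext_inner_right ℂ fun v => ?_
    exact congrArg (fun f : H →L[ℂ] ℂ => f v) h
end

section
/- Let A be a normed algebra possessing a left approximate identity (not necessarily bounded). Then the following are equivalent: (a) there exist a normed space X and an injective bounded algebra homomorphism π_l : A → B(X) making X a non-degenerate (hence faithful) normed left A-module; (b) the canonical homomorphisms δ : A → M(A) and φ_l : M(A) → M_l(A) are both injective; (c) the canonical homomorphism λ : A → M_l(A) is injective. -/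
open Filter Topology

universe u v

/-- **Existence of faithful non-degenerate left modules and injectivity of the canonical
maps.** Let `A` be a normed algebra with a (not necessarily bounded) left approximate
identity. The following are equivalent: (a) there exist a normed space `X` and an injective
bounded algebra homomorphism `π_l : A → B(X)` making `X` a non-degenerate (hence faithful)
normed left `A`-module; (b) the canonical homomorphisms `δ : A → M(A)` and
`φ_l : M(A) → M_l(A)` are both injective; (c) the canonical homomorphism `λ : A → M_l(A)`
is injective. -/
theorem faithful_module_iff_lambda_injective
    {𝕜 : Type v} [RCLike 𝕜]
    {A : Type u} [NonUnitalNormedRing A] [NormedSpace 𝕜 A]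
    [IsScalarTower 𝕜 A A] [SMulCommClass 𝕜 A A]
    {ι : Type*} (l : Filter ι) [l.NeBot] (e : ι → A)
    (he_lim : ∀ a : A, Tendsto (fun i => e i * a) l (𝓝 a)) :
    ((∃ (X : Type u) (_ : NormedAddCommGroup X) (_ : NormedSpace 𝕜 X)
        (π : A →L[𝕜] X →L[𝕜] X),
        (∀ a b : A, π (a * b) = π a * π b) ∧
        Function.Injective π ∧
        Dense (Submodule.span 𝕜 (Set.range fun p : A × X => π p.1 p.2) : Set X)) ↔
      (Function.Injective (fun a : A =>
          (ContinuousLinearMap.mul 𝕜 A a, (ContinuousLinearMap.mul 𝕜 A).flip a)) ∧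
        ∀ L R R' : A →L[𝕜] A, IsDoubleCentralizer 𝕜 L R → IsDoubleCentralizer 𝕜 L R' →
          R = R')) ∧
    ((Function.Injective (fun a : A =>
        (ContinuousLinearMap.mul 𝕜 A a, (ContinuousLinearMap.mul 𝕜 A).flip a)) ∧
      ∀ L R R' : A →L[𝕜] A, IsDoubleCentralizer 𝕜 L R → IsDoubleCentralizer 𝕜 L R' →
        R = R') ↔
      Function.Injective (fun a : A => ContinuousLinearMap.mul 𝕜 A a)) := by
  have inj_iff : Function.Injective (fun a : A => ContinuousLinearMap.mul 𝕜 A a) ↔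
      ∀ a b : A, (∀ c, a * c = b * c) → a = b := by
    constructor
    · intro h a b hab
      apply h
      ext c
      simpa using hab c
    · intro h a b hab
      apply h
      intro c
      simpa using congrArg (fun T : A →L[𝕜] A => T c) hab
  have dc : ∀ a : A, IsDoubleCentralizer 𝕜 (ContinuousLinearMap.mul 𝕜 A a)
      ((ContinuousLinearMap.mul 𝕜 A).flip a) := by
    intro a
    refine ⟨fun b c => ?_, fun b c => ?_, fun b c => ?_⟩ <;> simp [mul_assoc]
  have bc : (Function.Injective (fun a : A =>
        (ContinuousLinearMap.mul 𝕜 A a, (ContinuousLinearMap.mul 𝕜 A).flip a)) ∧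
      ∀ L R R' : A →L[𝕜] A, IsDoubleCentralizer 𝕜 L R → IsDoubleCentralizer 𝕜 L R' →
        R = R') ↔
      Function.Injective (fun a : A => ContinuousLinearMap.mul 𝕜 A a) := by
    constructor
    · rintro ⟨h1, h2⟩ a b hab
      have hab' : ContinuousLinearMap.mul 𝕜 A a = ContinuousLinearMap.mul 𝕜 A b := hab
      exact h1 (Prod.ext hab' (h2 _ _ _ (dc a) (hab' ▸ dc b)))
    · intro h
      refine ⟨fun a b hab => h (congrArg Prod.fst hab), fun L R R' hR hR' => ?_⟩
      ext a
      exact inj_iff.1 h _ _ fun c => by rw [← hR.2.2, ← hR'.2.2]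
  refine ⟨?_, bc⟩
  rw [bc]
  constructor
  · rintro ⟨X, _, _, π, hmul, hinj, hd⟩
    rw [inj_iff]
    intro a b hab
    apply hinj
    refine ContinuousLinearMap.ext_on hd ?_
    rintro _ ⟨⟨c, x⟩, rfl⟩
    have := congrArg (fun T : X →L[𝕜] X => T x) (congrArg π (hab c))
    simpa [hmul] using this
  · intro h
    refine ⟨A, inferInstance, inferInstance, ContinuousLinearMap.mul 𝕜 A, ?_, h, ?_⟩
    · intro a b
      ext c
      simp [mul_assoc]
    · intro a
      refine mem_closure_of_tendsto (he_lim a) (Eventually.of_forall fun i => ?_)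
      exact Submodule.subset_span ⟨(e i, a), by simp⟩
end

section
/- Let X be a normed space, let A be a normed algebra with an m-bounded approximate left identity (or, alternatively, an m-bounded approximate right identity), and let π : A → B(X) be a bounded homomorphism (resp. anti-homomorphism) making X a non-degenerate normed left (resp. right) A-module. For T in the left normalizer N_l(π(A), B(X)) let ‖λ(T)‖ = sup{‖Tπ(a)‖ : ‖π(a)‖ ≤ 1, a ∈ A} be the norm of left multiplication by T as an element of M_l(π(A)); for T in the right normalizer N_r(π(A), B(X)) define ‖ρ(T)‖ analogously. Then ‖λ(T)‖ ≤ ‖T‖ ≤ m‖π‖·‖λ(T)‖ for T ∈ N_l(π(A), B(X)), and ‖ρ(T)‖ ≤ ‖T‖ ≤ m‖π‖·‖ρ(T)‖ for T ∈ N_r(π(A), B(X)); in particular the operator norm from B(X) and the centralizer norm are equivalent on N_l(π(A), B(X)), on N_r(π(A), B(X)), and on N(π(A), B(X)). -/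
open Filter Topology

theorem aux_sup {𝕜 : Type*} [RCLike 𝕜] {A : Type*} [NonUnitalNormedRing A] [NormedSpace 𝕜 A]
    {X : Type*} [NormedAddCommGroup X] [NormedSpace 𝕜 X]
    (π : A →L[𝕜] X →L[𝕜] X) (F : A → X →L[𝕜] X) (K : ℝ) (hK : 0 ≤ K)
    (hF : ∀ (c : 𝕜) a, F (c • a) = c • F a) (hb : ∀ a, ‖F a‖ ≤ K * ‖π a‖) :
    sSup ((fun a : A => ‖F a‖) '' {a : A | ‖π a‖ ≤ 1}) ≤ K ∧
    0 ≤ sSup ((fun a : A => ‖F a‖) '' {a : A | ‖π a‖ ≤ 1}) ∧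
    ∀ a, ‖F a‖ ≤ ‖π a‖ * sSup ((fun a : A => ‖F a‖) '' {a : A | ‖π a‖ ≤ 1}) := by
  have hub : ∀ y ∈ ((fun a : A => ‖F a‖) '' {a : A | ‖π a‖ ≤ 1}), y ≤ K := by
    rintro _ ⟨a, ha, rfl⟩
    exact (hb a).trans (mul_le_of_le_one_right hK ha)
  refine ⟨Real.sSup_le hub hK, Real.sSup_nonneg ?_, fun a => ?_⟩
  · rintro _ ⟨a, ha, rfl⟩
    exact norm_nonneg _
  · by_cases h0 : ‖π a‖ = 0
    · have := hb a
      rw [h0] at this ⊢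
      simpa using this
    · have hpos : 0 < ‖π a‖ := lt_of_le_of_ne (norm_nonneg _) (Ne.symm h0)
      have hn : ‖((‖π a‖⁻¹ : ℝ) : 𝕜)‖ = ‖π a‖⁻¹ := by
        rw [RCLike.norm_ofReal, abs_of_pos (inv_pos.2 hpos)]
      have h1 : ‖F ((((‖π a‖⁻¹ : ℝ) : 𝕜)) • a)‖ ≤
          sSup ((fun a : A => ‖F a‖) '' {a : A | ‖π a‖ ≤ 1}) := by
        refine le_csSup ⟨K, hub⟩ ⟨_, ?_, rfl⟩
        simp only [Set.mem_ofPred_eq]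
        rw [map_smul, norm_smul, hn, inv_mul_cancel₀ h0]
      rw [hF, norm_smul, hn, inv_mul_le_iff₀ hpos] at h1
      exact h1

theorem aux_strong {𝕜 : Type*} [RCLike 𝕜] {A : Type*} [NonUnitalNormedRing A] [NormedSpace 𝕜 A]
    {X : Type*} [NormedAddCommGroup X] [NormedSpace 𝕜 X]
    {ι : Type*} (l : Filter ι) (S : ι → X →L[𝕜] X) (M : ℝ) (hM : 0 ≤ M) (hS : ∀ i, ‖S i‖ ≤ M)
    (π : A →L[𝕜] X →L[𝕜] X)
    (h : ∀ a, Tendsto (fun i => S i * π a) l (𝓝 (π a)))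
    (hnd : Dense (Submodule.span 𝕜 (Set.range fun p : A × X => π p.1 p.2) : Set X)) (x : X) :
    Tendsto (fun i => S i x) l (𝓝 x) := by
  have hsp : ∀ y ∈ Submodule.span 𝕜 (Set.range fun p : A × X => π p.1 p.2),
      Tendsto (fun i => S i y) l (𝓝 y) := by
    intro y hy
    induction hy using Submodule.span_induction with
    | mem y hy =>
      obtain ⟨⟨a, z⟩, rfl⟩ := hy
      exact ((ContinuousLinearMap.apply 𝕜 X z).continuous.tendsto (π a)).comp (h a)
    | zero => simpa using tendsto_const_nhds
    | add u v _ _ hu hv => simpa using hu.add hv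
    | smul c u _ hu => simpa using hu.const_smul c
  rw [Metric.tendsto_nhds]
  intro ε hε
  have hδ : 0 < ε / (M + 2) := by positivity
  obtain ⟨y, hy, hxy⟩ := hnd.exists_dist_lt x hδ
  filter_upwards [Metric.tendsto_nhds.1 (hsp y hy) _ hδ] with i hi
  have h1 : dist (S i x) (S i y) ≤ M * dist x y := by
    rw [dist_eq_norm, dist_eq_norm, ← map_sub]
    exact (S i).le_of_opNorm_le (hS i) _
  have h2 : M * dist x y ≤ M * (ε / (M + 2)) := by gcongr
  have h3 : M * (ε / (M + 2)) + ε / (M + 2) + ε / (M + 2) = ε := by field_simp; ring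
  have h4 := dist_triangle4 (S i x) (S i y) y x
  rw [dist_comm y x] at h4
  linarith

/-- **Equivalence of the two canonical norms on normalizers.** Let `X` be a normed space and
`A` a normed algebra with an `m`-bounded approximate left identity (or, alternatively, an
`m`-bounded approximate right identity), and let `π : A → B(X)` be a bounded homomorphism
(resp. anti-homomorphism) making `X` a non-degenerate normed left (resp. right) `A`-module.
For `T` in the left normalizer of `π(A)` let `‖λ(T)‖ = sup{‖Tπ(a)‖ : ‖π(a)‖ ≤ 1}`, the norm
of left multiplication by `T` as an element of `M_l(π(A))`; for `T` in the right normalizer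
define `‖ρ(T)‖` analogously. Then `‖λ(T)‖ ≤ ‖T‖ ≤ m‖π‖·‖λ(T)‖` on `N_l(π(A), B(X))` and
`‖ρ(T)‖ ≤ ‖T‖ ≤ m‖π‖·‖ρ(T)‖` on `N_r(π(A), B(X))`; in particular the operator norm of
`B(X)` and the centralizer norm are equivalent on `N_l`, `N_r` and `N`. -/
theorem normalizer_norms_equivalent
    {𝕜 : Type*} [RCLike 𝕜]
    {A : Type*} [NonUnitalNormedRing A] [NormedSpace 𝕜 A]
    [IsScalarTower 𝕜 A A] [SMulCommClass 𝕜 A A]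
    {X : Type*} [NormedAddCommGroup X] [NormedSpace 𝕜 X]
    (m : ℝ) {ι : Type*} (l : Filter ι) [l.NeBot] (e : ι → A)
    (he_bdd : ∀ i, ‖e i‖ ≤ m)
    (π : A →L[𝕜] X →L[𝕜] X)
    (hcase :
      ((∀ a b : A, π (a * b) = π a * π b) ∧
        ∀ a : A, Tendsto (fun i => e i * a) l (𝓝 a)) ∨
      ((∀ a b : A, π (a * b) = π b * π a) ∧
        ∀ a : A, Tendsto (fun i => a * e i) l (𝓝 a)))
    (hnd : Dense (Submodule.span 𝕜 (Set.range fun p : A × X => π p.1 p.2) : Set X)) :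
    (∀ T : X →L[𝕜] X, (∀ a : A, ∃ b : A, T * π a = π b) →
      sSup ((fun a : A => ‖T * π a‖) '' {a : A | ‖π a‖ ≤ 1}) ≤ ‖T‖ ∧
      ‖T‖ ≤ m * ‖π‖ * sSup ((fun a : A => ‖T * π a‖) '' {a : A | ‖π a‖ ≤ 1})) ∧
    (∀ T : X →L[𝕜] X, (∀ a : A, ∃ b : A, π a * T = π b) →
      sSup ((fun a : A => ‖π a * T‖) '' {a : A | ‖π a‖ ≤ 1}) ≤ ‖T‖ ∧
      ‖T‖ ≤ m * ‖π‖ * sSup ((fun a : A => ‖π a * T‖) '' {a : A | ‖π a‖ ≤ 1})) := by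
  obtain ⟨i0⟩ : Nonempty ι := l.nonempty_of_neBot
  have hm : 0 ≤ m := (norm_nonneg _).trans (he_bdd i0)
  have hM : 0 ≤ m * ‖π‖ := by positivity
  have hS : ∀ i, ‖π (e i)‖ ≤ m * ‖π‖ := fun i =>
    (π.le_opNorm _).trans (by rw [mul_comm]; gcongr; exact he_bdd i)
  have hst : ∀ a, Tendsto (fun i => π (e i) * π a) l (𝓝 (π a)) := by
    intro a
    rcases hcase with ⟨h1, h2⟩ | ⟨h1, h2⟩
    · simpa only [Function.comp_def, h1] using (π.continuous.tendsto a).comp (h2 a)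
    · simpa only [Function.comp_def, h1] using (π.continuous.tendsto a).comp (h2 a)
  have hx := aux_strong l (fun i => π (e i)) _ hM hS π hst hnd
  refine ⟨fun T _ => ?_, fun T _ => ?_⟩
  · obtain ⟨h1, h0, h2⟩ := aux_sup π (fun a => T * π a) ‖T‖ (norm_nonneg _)
      (fun c a => by simp only [map_smul, mul_smul_comm]) (fun a => norm_mul_le _ _)
    refine ⟨h1, T.opNorm_le_bound (mul_nonneg hM h0) fun x => ?_⟩
    refine le_of_tendsto ((T.continuous.tendsto x).comp (hx x)).norm (Eventually.of_forall fun i => ?_)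
    exact (T * π (e i)).le_of_opNorm_le ((h2 _).trans (mul_le_mul_of_nonneg_right (hS i) h0)) x
  · obtain ⟨h1, h0, h2⟩ := aux_sup π (fun a => π a * T) ‖T‖ (norm_nonneg _)
      (fun c a => by simp only [map_smul, smul_mul_assoc])
      (fun a => (norm_mul_le _ _).trans_eq (mul_comm _ _))
    refine ⟨h1, T.opNorm_le_bound (mul_nonneg hM h0) fun x => ?_⟩
    refine le_of_tendsto (hx (T x)).norm (Eventually.of_forall fun i => ?_)
    exact (π (e i) * T).le_of_opNorm_le ((h2 _).trans (mul_le_mul_of_nonneg_right (hS i) h0)) x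
end

section
/- Let A be a normed algebra with an m-bounded approximate left identity, let X be a Banach space, and let π_l : A → B(X) be an injective bounded algebra homomorphism making X a non-degenerate faithful normed left A-module, such that the inverse π_l^{-1} : π_l(A) → A is bounded. Then the unique homomorphism π̄_l : M_l(A) → B(X) with π̄_l ∘ λ = π_l is an algebra isomorphism from M_l(A) onto the left normalizer N_l(π_l(A), B(X)); when N_l(π_l(A), B(X)) carries the operator norm of B(X), π̄_l is bounded with ‖π̄_l‖ ≤ m‖π_l‖ and its inverse is bounded with ‖π̄_l^{-1}‖ ≤ ‖π_l‖·‖π_l^{-1}‖, the inverse being given by π̄_l^{-1}(T)(a) = π_l^{-1}(T π_l(a)) for T ∈ N_l(π_l(A), B(X)) and a ∈ A. -/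
open Filter Topology

/-- **Embedding of the left centralizer algebra as the left normalizer.** Let `A` be a normed
algebra with an `m`-bounded approximate left identity, `X` a Banach space, and
`π_l : A → B(X)` an injective bounded homomorphism making `X` a non-degenerate faithful
normed left `A`-module, whose inverse `π_l⁻¹ : π_l(A) → A` is bounded (by `C`). Then the
unique homomorphism `π̄_l : M_l(A) → B(X)` with `π̄_l ∘ λ = π_l` is an algebra isomorphism
from `M_l(A)` onto the left normalizer `N_l(π_l(A), B(X))`, with `‖π̄_l‖ ≤ m‖π_l‖` and
`‖π̄_l⁻¹‖ ≤ ‖π_l‖·‖π_l⁻¹‖` for the operator norm of `B(X)`, the inverse being given by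
`π̄_l⁻¹(T)(a) = π_l⁻¹(T π_l(a))`. -/
theorem left_centralizers_embed_as_left_normalizer
    {𝕜 : Type*} [RCLike 𝕜]
    {A : Type*} [NonUnitalNormedRing A] [NormedSpace 𝕜 A]
    [IsScalarTower 𝕜 A A] [SMulCommClass 𝕜 A A]
    {X : Type*} [NormedAddCommGroup X] [NormedSpace 𝕜 X] [CompleteSpace X]
    (m : ℝ) {ι : Type*} (l : Filter ι) [l.NeBot] (e : ι → A)
    (he_bdd : ∀ i, ‖e i‖ ≤ m)
    (he_lim : ∀ a : A, Tendsto (fun i => e i * a) l (𝓝 a))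
    (π : A →L[𝕜] X →L[𝕜] X)
    (hπmul : ∀ a b : A, π (a * b) = π a * π b)
    (hπinj : Function.Injective π)
    (hnd : Dense (Submodule.span 𝕜 (Set.range fun p : A × X => π p.1 p.2) : Set X))
    (C : ℝ) (hC : ∀ a : A, ‖a‖ ≤ C * ‖π a‖)
    -- `π̄_l : M_l(A) → B(X)`, the canonical homomorphism with `π̄_l ∘ λ = π_l`
    (πbl : LeftCentralizers 𝕜 A → X →L[𝕜] X)
    (hπbl_add : ∀ (L K : LeftCentralizers 𝕜 A)
      (h : (L : A →L[𝕜] A) + K ∈ LeftCentralizers 𝕜 A),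
      πbl ⟨(L : A →L[𝕜] A) + K, h⟩ = πbl L + πbl K)
    (hπbl_smul : ∀ (c : 𝕜) (L : LeftCentralizers 𝕜 A)
      (h : c • (L : A →L[𝕜] A) ∈ LeftCentralizers 𝕜 A),
      πbl ⟨c • (L : A →L[𝕜] A), h⟩ = c • πbl L)
    (hπbl_mul : ∀ (L K : LeftCentralizers 𝕜 A)
      (h : (L : A →L[𝕜] A) * K ∈ LeftCentralizers 𝕜 A),
      πbl ⟨(L : A →L[𝕜] A) * K, h⟩ = πbl L * πbl K)
    (hπbl_lam : ∀ (a : A) (h : ContinuousLinearMap.mul 𝕜 A a ∈ LeftCentralizers 𝕜 A),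
      πbl ⟨ContinuousLinearMap.mul 𝕜 A a, h⟩ = π a) :
    -- `π̄_l` maps `M_l(A)` into the left normalizer of `π_l(A)`:
    (∀ (L : LeftCentralizers 𝕜 A) (a : A), πbl L * π a = π ((L : A →L[𝕜] A) a)) ∧
    -- `π̄_l` is injective,
    (∀ L K : LeftCentralizers 𝕜 A, πbl L = πbl K → L = K) ∧
    -- `π̄_l` is onto `N_l(π_l(A), B(X))`, with inverse `T ↦ (a ↦ π_l⁻¹(T π_l(a)))`:
    (∀ T : X →L[𝕜] X, (∀ a : A, ∃ b : A, T * π a = π b) →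
      ∃ (L : A →L[𝕜] A) (hL : L ∈ LeftCentralizers 𝕜 A),
        πbl ⟨L, hL⟩ = T ∧ ∀ a : A, π (L a) = T * π a) ∧
    -- `‖π̄_l‖ ≤ m ‖π_l‖` and `‖π̄_l⁻¹‖ ≤ ‖π_l‖ ‖π_l⁻¹‖`:
    (∀ L : LeftCentralizers 𝕜 A, ‖πbl L‖ ≤ m * ‖π‖ * ‖(L : A →L[𝕜] A)‖) ∧
    (∀ L : LeftCentralizers 𝕜 A, ‖(L : A →L[𝕜] A)‖ ≤ ‖π‖ * C * ‖πbl L‖) := by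
  have key : ∀ (L : LeftCentralizers 𝕜 A) (a : A),
      πbl L * π a = π ((L : A →L[𝕜] A) a) := by
    intro L a
    have hmem : ∀ c : A, ContinuousLinearMap.mul 𝕜 A c ∈ LeftCentralizers 𝕜 A := by
      intro c x y
      simp [mul_assoc]
    have heq : (L : A →L[𝕜] A) * ContinuousLinearMap.mul 𝕜 A a
        = ContinuousLinearMap.mul 𝕜 A ((L : A →L[𝕜] A) a) := by
      ext b
      exact L.2 a b
    have hm2 : (L : A →L[𝕜] A) * ContinuousLinearMap.mul 𝕜 A a ∈ LeftCentralizers 𝕜 A := by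
      rw [heq]; exact hmem _
    have h1 := hπbl_mul L ⟨ContinuousLinearMap.mul 𝕜 A a, hmem a⟩ hm2
    rw [hπbl_lam a (hmem a)] at h1
    rw [← h1, ← hπbl_lam _ (hmem _)]
    congr 1
    exact Subtype.ext heq
  obtain ⟨i0⟩ : Nonempty ι := l.nonempty_of_neBot
  have hm0 : 0 ≤ m := (norm_nonneg _).trans (he_bdd i0)
  refine ⟨key, ?_, ?_, ?_, ?_⟩
  · intro L K h
    apply Subtype.ext
    ext a
    apply hπinj
    rw [← key, ← key, h]
  · intro T hT
    choose f hf using hT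
    let g : A →ₗ[𝕜] A :=
      { toFun := f
        map_add' := fun a b => hπinj (by
          rw [← hf, map_add, map_add, mul_add, hf, hf])
        map_smul' := fun c a => hπinj (by
          rw [← hf, RingHom.id_apply, map_smul, map_smul, mul_smul_comm, hf]) }
    let L : A →L[𝕜] A := g.mkContinuous (|C| * (‖T‖ * ‖π‖)) (by
      intro a
      calc ‖f a‖ ≤ C * ‖π (f a)‖ := hC _
        _ ≤ |C| * ‖π (f a)‖ := by gcongr; exact le_abs_self C
        _ = |C| * ‖T * π a‖ := by rw [hf]
        _ ≤ |C| * (‖T‖ * (‖π‖ * ‖a‖)) := by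
          gcongr
          exact (norm_mul_le _ _).trans (by gcongr; exact π.le_opNorm a)
        _ = _ := by ring)
    have hLf : ∀ a, π (L a) = T * π a := fun a => (hf a).symm
    have hL : L ∈ LeftCentralizers 𝕜 A := by
      intro a b
      apply hπinj
      rw [hLf, hπmul, hπmul, hLf, mul_assoc]
    refine ⟨L, hL, ?_, hLf⟩
    refine ContinuousLinearMap.ext_on hnd ?_
    rintro _ ⟨⟨a, x⟩, rfl⟩
    have h2 := (key ⟨L, hL⟩ a).trans (hLf a)
    exact DFunLike.congr_fun h2 x
  · intro L
    have happ : ∀ y ∈ Submodule.span 𝕜 (Set.range fun p : A × X => π p.1 p.2),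
        Tendsto (fun i => π (e i) y) l (𝓝 y) := by
      intro y hy
      induction hy using Submodule.span_induction with
      | mem y hy =>
        obtain ⟨⟨a, x⟩, rfl⟩ := hy
        have h1 : Tendsto (fun i => π (e i * a) x) l (𝓝 (π a x)) :=
          (((ContinuousLinearMap.apply 𝕜 X x).continuous.comp π.continuous).tendsto a).comp
            (he_lim a)
        simpa [hπmul] using h1
      | zero => simp
      | add y z _ _ h1 h2 => simpa using h1.add h2
      | smul c y _ h1 => simpa using h1.const_smul c
    have hb : ∀ y ∈ (Submodule.span 𝕜 (Set.range fun p : A × X => π p.1 p.2) : Set X),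
        ‖πbl L y‖ ≤ m * ‖π‖ * ‖(L : A →L[𝕜] A)‖ * ‖y‖ := by
      intro y hy
      have h1 := (((πbl L).continuous.tendsto y).comp (happ y hy)).norm
      refine le_of_tendsto h1 (Eventually.of_forall fun i => ?_)
      have h2 : πbl L (π (e i) y) = π ((L : A →L[𝕜] A) (e i)) y :=
        DFunLike.congr_fun (key L (e i)) y
      simp only [Function.comp_apply]
      rw [h2]
      calc ‖π ((L : A →L[𝕜] A) (e i)) y‖ ≤ ‖π‖ * ‖(L : A →L[𝕜] A) (e i)‖ * ‖y‖ :=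
            π.le_opNorm₂ _ _
        _ ≤ ‖π‖ * (‖(L : A →L[𝕜] A)‖ * m) * ‖y‖ := by
          gcongr
          exact ContinuousLinearMap.le_opNorm_of_le _ (he_bdd i)
        _ = _ := by ring
    refine ContinuousLinearMap.opNorm_le_bound _ (by positivity) fun x => ?_
    have hcl : IsClosed {y : X | ‖πbl L y‖ ≤ m * ‖π‖ * ‖(L : A →L[𝕜] A)‖ * ‖y‖} :=
      isClosed_le (by fun_prop) (by fun_prop)
    exact closure_minimal hb hcl (hnd x)
  · intro L
    rcases le_or_gt 0 C with hC0 | hC0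
    · refine ContinuousLinearMap.opNorm_le_bound _ (by positivity) fun a => ?_
      calc ‖(L : A →L[𝕜] A) a‖ ≤ C * ‖π ((L : A →L[𝕜] A) a)‖ := hC _
        _ = C * ‖πbl L * π a‖ := by rw [key]
        _ ≤ C * (‖πbl L‖ * (‖π‖ * ‖a‖)) := by
          gcongr
          exact (norm_mul_le _ _).trans (by gcongr; exact π.le_opNorm a)
        _ = _ := by ring
    · have hz : ∀ a : A, a = 0 := fun a => norm_le_zero_iff.1
        ((hC a).trans (mul_nonpos_of_nonpos_of_nonneg hC0.le (norm_nonneg _)))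
      have h1 : (L : A →L[𝕜] A) = 0 := by ext a; exact hz _
      have h2 : ‖π‖ = 0 := by
        refine le_antisymm (π.opNorm_le_bound le_rfl fun a => ?_) (norm_nonneg π)
        rw [hz a, map_zero, norm_zero, norm_zero, mul_zero]
      rw [h1, h2, norm_zero, zero_mul, zero_mul]
end

section
/- Let A be a normed algebra with an m-bounded approximate left identity, let X be a Banach space, and let π_l : A → B(X) be an injective bounded algebra homomorphism making X a non-degenerate faithful normed left A-module, such that π_l^{-1} : π_l(A) → A is bounded. Then π̄_l ∘ φ_l : M(A) → B(X) is an algebra isomorphism from the double centralizer algebra M(A) onto the normalizer N(π_l(A), B(X)); when N(π_l(A), B(X)) carries the operator norm of B(X), one has ‖π̄_l ∘ φ_l‖ ≤ m‖π_l‖ and ‖(π̄_l ∘ φ_l)^{-1}‖ ≤ ‖π_l‖·‖π_l^{-1}‖, the inverse being given by T ↦ (L_T, R_T) where L_T(a) = π_l^{-1}(T π_l(a)) and R_T(a) = π_l^{-1}(π_l(a) T). -/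
open Filter Topology

/-- **Embedding of the double centralizer algebra as the normalizer.** Let `A` be a normed
algebra with an `m`-bounded approximate left identity, `X` a Banach space, and
`π_l : A → B(X)` an injective bounded homomorphism making `X` a non-degenerate faithful
normed left `A`-module with bounded inverse `π_l⁻¹` (bounded by `C`). Then
`π̄_l ∘ φ_l : M(A) → B(X)` is an algebra isomorphism from `M(A)` onto the normalizer
`N(π_l(A), B(X))`, with `‖π̄_l ∘ φ_l‖ ≤ m‖π_l‖` and `‖(π̄_l ∘ φ_l)⁻¹‖ ≤ ‖π_l‖·‖π_l⁻¹‖`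
for the operator norm of `B(X)` (the norm on `M(A)` being `max(‖L‖, ‖R‖)`); the inverse is
`T ↦ (L_T, R_T)` with `L_T(a) = π_l⁻¹(T π_l(a))` and `R_T(a) = π_l⁻¹(π_l(a) T)`. -/
theorem double_centralizers_embed_as_normalizer
    {𝕜 : Type*} [RCLike 𝕜]
    {A : Type*} [NonUnitalNormedRing A] [NormedSpace 𝕜 A]
    [IsScalarTower 𝕜 A A] [SMulCommClass 𝕜 A A]
    {X : Type*} [NormedAddCommGroup X] [NormedSpace 𝕜 X] [CompleteSpace X]
    (m : ℝ) {ι : Type*} (l : Filter ι) [l.NeBot] (e : ι → A)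
    (he_bdd : ∀ i, ‖e i‖ ≤ m)
    (he_lim : ∀ a : A, Tendsto (fun i => e i * a) l (𝓝 a))
    (π : A →L[𝕜] X →L[𝕜] X)
    (hπmul : ∀ a b : A, π (a * b) = π a * π b)
    (hπinj : Function.Injective π)
    (hnd : Dense (Submodule.span 𝕜 (Set.range fun p : A × X => π p.1 p.2) : Set X))
    (C : ℝ) (hC : ∀ a : A, ‖a‖ ≤ C * ‖π a‖)
    -- `π̄_l : M_l(A) → B(X)`, the canonical homomorphism with `π̄_l ∘ λ = π_l`
    (πbl : LeftCentralizers 𝕜 A → X →L[𝕜] X)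
    (hπbl_add : ∀ (L K : LeftCentralizers 𝕜 A)
      (h : (L : A →L[𝕜] A) + K ∈ LeftCentralizers 𝕜 A),
      πbl ⟨(L : A →L[𝕜] A) + K, h⟩ = πbl L + πbl K)
    (hπbl_smul : ∀ (c : 𝕜) (L : LeftCentralizers 𝕜 A)
      (h : c • (L : A →L[𝕜] A) ∈ LeftCentralizers 𝕜 A),
      πbl ⟨c • (L : A →L[𝕜] A), h⟩ = c • πbl L)
    (hπbl_mul : ∀ (L K : LeftCentralizers 𝕜 A)
      (h : (L : A →L[𝕜] A) * K ∈ LeftCentralizers 𝕜 A),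
      πbl ⟨(L : A →L[𝕜] A) * K, h⟩ = πbl L * πbl K)
    (hπbl_lam : ∀ (a : A) (h : ContinuousLinearMap.mul 𝕜 A a ∈ LeftCentralizers 𝕜 A),
      πbl ⟨ContinuousLinearMap.mul 𝕜 A a, h⟩ = π a) :
    -- `π̄_l ∘ φ_l` maps `M(A)` into the normalizer `N(π_l(A), B(X))`:
    (∀ (L R : A →L[𝕜] A) (hDC : IsDoubleCentralizer 𝕜 L R) (a : A),
      πbl ⟨L, hDC.1⟩ * π a = π (L a) ∧ π a * πbl ⟨L, hDC.1⟩ = π (R a)) ∧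
    -- it is injective on `M(A)`:
    (∀ (L R L' R' : A →L[𝕜] A) (hDC : IsDoubleCentralizer 𝕜 L R)
      (hDC' : IsDoubleCentralizer 𝕜 L' R'),
      πbl ⟨L, hDC.1⟩ = πbl ⟨L', hDC'.1⟩ → L = L' ∧ R = R') ∧
    -- it is onto `N(π_l(A), B(X))`, with inverse `T ↦ (L_T, R_T)`:
    (∀ T : X →L[𝕜] X,
      (∀ a : A, (∃ b : A, T * π a = π b) ∧ (∃ b : A, π a * T = π b)) →
      ∃ (L R : A →L[𝕜] A) (hDC : IsDoubleCentralizer 𝕜 L R),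
        πbl ⟨L, hDC.1⟩ = T ∧ (∀ a : A, π (L a) = T * π a) ∧
        (∀ a : A, π (R a) = π a * T)) ∧
    -- `‖π̄_l ∘ φ_l‖ ≤ m ‖π_l‖` and `‖(π̄_l ∘ φ_l)⁻¹‖ ≤ ‖π_l‖ ‖π_l⁻¹‖`:
    (∀ (L R : A →L[𝕜] A) (hDC : IsDoubleCentralizer 𝕜 L R),
      ‖πbl ⟨L, hDC.1⟩‖ ≤ m * ‖π‖ * max ‖L‖ ‖R‖ ∧
      max ‖L‖ ‖R‖ ≤ ‖π‖ * C * ‖πbl ⟨L, hDC.1⟩‖) := by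
  have hlam : ∀ a : A, ContinuousLinearMap.mul 𝕜 A a ∈ LeftCentralizers 𝕜 A := by
    intro a b c
    simp [mul_assoc]
  have h1 : ∀ (L : LeftCentralizers 𝕜 A) (a : A), πbl L * π a = π ((L : A →L[𝕜] A) a) := by
    intro L a
    have hE : (L : A →L[𝕜] A) * ContinuousLinearMap.mul 𝕜 A a
        = ContinuousLinearMap.mul 𝕜 A ((L : A →L[𝕜] A) a) := by
      ext b
      exact L.2 a b
    have hm : (L : A →L[𝕜] A) * ContinuousLinearMap.mul 𝕜 A a ∈ LeftCentralizers 𝕜 A := by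
      rw [hE]; exact hlam _
    have h := hπbl_mul L ⟨_, hlam a⟩ hm
    rw [hπbl_lam] at h
    rw [← h, ← hπbl_lam _ (hlam _)]
    congr 1
    exact Subtype.ext hE
  have h2 : ∀ (L R : A →L[𝕜] A) (hDC : IsDoubleCentralizer 𝕜 L R) (a : A),
      π a * πbl ⟨L, hDC.1⟩ = π (R a) := by
    intro L R hDC a
    have hE : ContinuousLinearMap.mul 𝕜 A a * L = ContinuousLinearMap.mul 𝕜 A (R a) := by
      ext b
      exact hDC.2.2 a b
    have hm : ContinuousLinearMap.mul 𝕜 A a * L ∈ LeftCentralizers 𝕜 A := by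
      rw [hE]; exact hlam _
    have h := hπbl_mul ⟨_, hlam a⟩ ⟨L, hDC.1⟩ hm
    rw [hπbl_lam] at h
    rw [← h, ← hπbl_lam _ (hlam _)]
    congr 1
    exact Subtype.ext hE
  have hbound : ∀ a : A, ‖a‖ ≤ |C| * ‖π a‖ := fun a =>
    (hC a).trans (mul_le_mul_of_nonneg_right (le_abs_self C) (norm_nonneg _))
  refine ⟨fun L R hDC a => ⟨h1 ⟨L, hDC.1⟩ a, h2 L R hDC a⟩, ?_, ?_, ?_⟩
  · intro L R L' R' hDC hDC' h
    constructor
    · ext a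
      apply hπinj
      have e1 := h1 ⟨L, hDC.1⟩ a
      have e2 := h1 ⟨L', hDC'.1⟩ a
      rw [h] at e1
      exact e1.symm.trans e2
    · ext a
      apply hπinj
      rw [← h2 L R hDC a, ← h2 L' R' hDC' a, h]
  · intro T hT
    choose f hf using fun a => (hT a).1
    choose g hg using fun a => (hT a).2
    let L : A →L[𝕜] A := LinearMap.mkContinuous
      { toFun := f
        map_add' := fun a b => hπinj (by rw [map_add, ← hf, ← hf, ← hf, map_add, mul_add])
        map_smul' := fun c a => hπinj (by
          rw [map_smul, ← hf, ← hf, map_smul, RingHom.id_apply, mul_smul_comm]) }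
      (|C| * (‖T‖ * ‖π‖)) (by
        intro a
        change ‖f a‖ ≤ _
        calc ‖f a‖ ≤ |C| * ‖π (f a)‖ := hbound _
          _ ≤ |C| * (‖T‖ * (‖π‖ * ‖a‖)) := by
            rw [← hf]
            gcongr
            exact (norm_mul_le _ _).trans (by gcongr; exact π.le_opNorm a)
          _ = _ := by ring)
    let R : A →L[𝕜] A := LinearMap.mkContinuous
      { toFun := g
        map_add' := fun a b => hπinj (by rw [map_add, ← hg, ← hg, ← hg, map_add, add_mul])
        map_smul' := fun c a => hπinj (by
          rw [map_smul, ← hg, ← hg, map_smul, RingHom.id_apply, smul_mul_assoc]) }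
      (|C| * (‖π‖ * ‖T‖)) (by
        intro a
        change ‖g a‖ ≤ _
        calc ‖g a‖ ≤ |C| * ‖π (g a)‖ := hbound _
          _ ≤ |C| * ((‖π‖ * ‖a‖) * ‖T‖) := by
            rw [← hg]
            gcongr
            exact (norm_mul_le _ _).trans (by gcongr; exact π.le_opNorm a)
          _ = _ := by ring)
    have hL : ∀ a, π (L a) = T * π a := fun a => (hf a).symm
    have hR : ∀ a, π (R a) = π a * T := fun a => (hg a).symm
    have hDC : IsDoubleCentralizer 𝕜 L R := by
      refine ⟨fun a b => hπinj ?_, fun a b => hπinj ?_, fun a b => hπinj ?_⟩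
      · rw [hL, hπmul, hπmul, hL, mul_assoc]
      · rw [hR, hπmul, hπmul, hR, mul_assoc]
      · rw [hπmul, hπmul, hL, hR, mul_assoc]
    refine ⟨L, R, hDC, ?_, hL, hR⟩
    refine ContinuousLinearMap.ext_on hnd ?_
    rintro _ ⟨⟨a, x⟩, rfl⟩
    have h := h1 ⟨L, hDC.1⟩ a
    rw [show π (((⟨L, hDC.1⟩ : LeftCentralizers 𝕜 A) : A →L[𝕜] A) a) = T * π a from hL a] at h
    exact congrArg (fun S : X →L[𝕜] X => S x) h
  · intro L R hDC
    constructor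
    · obtain ⟨i0⟩ : Nonempty ι := l.nonempty_of_neBot
      have hm0 : 0 ≤ m := (norm_nonneg _).trans (he_bdd i0)
      have hconv : ∀ x ∈ Submodule.span 𝕜 (Set.range fun p : A × X => π p.1 p.2),
          Tendsto (fun i => π (e i) x) l (𝓝 x) := by
        intro x hx
        induction hx using Submodule.span_induction with
        | mem x hx =>
          obtain ⟨⟨a, y⟩, rfl⟩ := hx
          have hc : Continuous fun b : A => π b y := by fun_prop
          have := (hc.tendsto a).comp (he_lim a)
          refine this.congr fun i => ?_
          simp [hπmul]
        | zero => simp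
        | add x y _ _ hx hy => simpa using hx.add hy
        | smul c x _ hx => simpa using hx.const_smul c
      have key : ∀ x : X, ‖πbl ⟨L, hDC.1⟩ x‖ ≤ (m * ‖π‖ * ‖L‖) * ‖x‖ := by
        intro x
        have hcl : IsClosed {x : X | ‖πbl ⟨L, hDC.1⟩ x‖ ≤ (m * ‖π‖ * ‖L‖) * ‖x‖} :=
          isClosed_le (by fun_prop) (by fun_prop)
        refine (hcl.closure_subset_iff.2 ?_) (hnd x)
        intro x hx
        have ht := (((πbl ⟨L, hDC.1⟩).continuous.tendsto x).comp (hconv x hx)).norm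
        refine le_of_tendsto ht (Eventually.of_forall fun i => ?_)
        have h := congrArg (fun S : X →L[𝕜] X => S x) (h1 ⟨L, hDC.1⟩ (e i))
        change πbl ⟨L, hDC.1⟩ (π (e i) x) = π (L (e i)) x at h
        change ‖πbl ⟨L, hDC.1⟩ (π (e i) x)‖ ≤ _
        rw [h]
        calc ‖π (L (e i)) x‖ ≤ ‖π (L (e i))‖ * ‖x‖ := ContinuousLinearMap.le_opNorm _ _
          _ ≤ (‖π‖ * (‖L‖ * m)) * ‖x‖ := by
            gcongr
            refine (π.le_opNorm _).trans ?_
            gcongr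
            refine (L.le_opNorm _).trans ?_
            gcongr
            exact he_bdd i
          _ = _ := by ring
      refine (ContinuousLinearMap.opNorm_le_bound _ (by positivity) key).trans ?_
      gcongr
      exact le_max_left _ _
    · rcases lt_or_ge C 0 with hneg | hpos
      · have hz : ∀ a : A, a = 0 := fun a => norm_le_zero_iff.1
          ((hC a).trans (mul_nonpos_of_nonpos_of_nonneg hneg.le (norm_nonneg _)))
        have hL0 : L = 0 := by ext a; exact hz _
        have hR0 : R = 0 := by ext a; exact hz _
        have hp0 : π = 0 := by
          ext a x; rw [hz a]; simp
        have hn : max ‖L‖ ‖R‖ = 0 := by rw [hL0, hR0]; simp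
        have hp : ‖π‖ = 0 := by rw [hp0]; exact ContinuousLinearMap.opNorm_zero
        rw [hn, hp, zero_mul, zero_mul]
      · refine max_le ?_ ?_
        · refine ContinuousLinearMap.opNorm_le_bound _ (by positivity) fun a => ?_
          calc ‖L a‖ ≤ C * ‖π (L a)‖ := hC _
            _ ≤ C * (‖πbl ⟨L, hDC.1⟩‖ * (‖π‖ * ‖a‖)) := by
              have h := h1 ⟨L, hDC.1⟩ a
              change _ = π (L a) at h
              rw [← h]
              gcongr
              exact (norm_mul_le _ _).trans (by gcongr; exact π.le_opNorm a)
            _ = _ := by ring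
        · refine ContinuousLinearMap.opNorm_le_bound _ (by positivity) fun a => ?_
          calc ‖R a‖ ≤ C * ‖π (R a)‖ := hC _
            _ ≤ C * ((‖π‖ * ‖a‖) * ‖πbl ⟨L, hDC.1⟩‖) := by
              rw [← h2 L R hDC a]
              gcongr
              exact (norm_mul_le _ _).trans (by gcongr; exact π.le_opNorm a)
            _ = _ := by ring
end

section
/- Let X be a Banach space and let A be a (not necessarily closed) subalgebra of B(X) acting non-degenerately on X and possessing a bounded approximate left identity. Then M_l(A) is canonically isometrically isomorphic with the left normalizer N_l(A, B(X)) equipped with the norm from M_l(A) (i.e., T ↦ ‖λ(T)‖ where λ(T) denotes left multiplication by T on A), and M(A) is canonically isometrically isomorphic with N(A, B(X)) equipped with the norm from M(A) (i.e., T ↦ max(‖λ(T)‖, ‖ρ(T)‖)). The isomorphism sends T ∈ N_l(A, B(X)) to the left centralizer a ↦ Ta, respectively T ∈ N(A, B(X)) to the double centralizer (a ↦ Ta, a ↦ aT). -/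
open Filter Topology

theorem oac_inj
    {𝕜 : Type*} [RCLike 𝕜]
    {X : Type*} [NormedAddCommGroup X] [NormedSpace 𝕜 X]
    (A : NonUnitalSubalgebra 𝕜 (X →L[𝕜] X))
    (hnd : Dense (Submodule.span 𝕜
      (Set.range fun p : A × X => (p.1 : X →L[𝕜] X) p.2) : Set X))
    (T T' : X →L[𝕜] X)
    (h : ∀ a : A, T * (a : X →L[𝕜] X) = T' * (a : X →L[𝕜] X)) : T = T' := by
  refine ContinuousLinearMap.ext_on hnd ?_
  rintro _ ⟨⟨a, x⟩, rfl⟩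
  exact congrArg (fun S : X →L[𝕜] X => S x) (h a)

theorem oac_left
    {𝕜 : Type*} [RCLike 𝕜]
    {X : Type*} [NormedAddCommGroup X] [NormedSpace 𝕜 X]
    (A : NonUnitalSubalgebra 𝕜 (X →L[𝕜] X))
    (T : X →L[𝕜] X) (hT : ∀ a : A, T * (a : X →L[𝕜] X) ∈ A) :
    ∃ L : A →L[𝕜] A, ∀ a : A, (L a : X →L[𝕜] X) = T * (a : X →L[𝕜] X) := by
  let L0 : A →ₗ[𝕜] A :=
    { toFun := fun a => ⟨T * (a : X →L[𝕜] X), hT a⟩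
      map_add' := fun a b => Subtype.ext (mul_add T (a : X →L[𝕜] X) b)
      map_smul' := fun c a => Subtype.ext (mul_smul_comm c T (a : X →L[𝕜] X)) }
  exact ⟨L0.mkContinuous ‖T‖ fun a => norm_mul_le T (a : X →L[𝕜] X), fun a => rfl⟩

theorem oac_right
    {𝕜 : Type*} [RCLike 𝕜]
    {X : Type*} [NormedAddCommGroup X] [NormedSpace 𝕜 X]
    (A : NonUnitalSubalgebra 𝕜 (X →L[𝕜] X))
    (T : X →L[𝕜] X) (hT : ∀ a : A, (a : X →L[𝕜] X) * T ∈ A) :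
    ∃ L : A →L[𝕜] A, ∀ a : A, (L a : X →L[𝕜] X) = (a : X →L[𝕜] X) * T := by
  let L0 : A →ₗ[𝕜] A :=
    { toFun := fun a => ⟨(a : X →L[𝕜] X) * T, hT a⟩
      map_add' := fun a b => Subtype.ext (add_mul (a : X →L[𝕜] X) b T)
      map_smul' := fun c a => Subtype.ext (smul_mul_assoc c (a : X →L[𝕜] X) T) }
  exact ⟨L0.mkContinuous ‖T‖ fun a =>
    (norm_mul_le (a : X →L[𝕜] X) T).trans_eq (mul_comm _ _), fun a => rfl⟩

theorem oac_conv
    {𝕜 : Type*} [RCLike 𝕜]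
    {X : Type*} [NormedAddCommGroup X] [NormedSpace 𝕜 X] [CompleteSpace X]
    {ι : Type*} (l : Filter ι) [l.NeBot] (S : ι → X →L[𝕜] X) (C : ℝ)
    (hS : ∀ i, ‖S i‖ ≤ C) (V : Submodule 𝕜 X) (hV : Dense (V : Set X))
    (hc : ∀ x ∈ V, ∃ y, Tendsto (fun i => S i x) l (𝓝 y)) :
    ∃ T : X →L[𝕜] X, ∀ x, Tendsto (fun i => S i x) l (𝓝 (T x)) := by
  have key : ∀ x, ∃ y, Tendsto (fun i => S i x) l (𝓝 y) := by
    intro x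
    obtain ⟨i0⟩ := l.nonempty_of_neBot
    have hC : 0 ≤ C := (norm_nonneg _).trans (hS i0)
    refine cauchy_map_iff_exists_tendsto.1 ?_
    rw [Metric.cauchy_iff]
    refine ⟨inferInstance, fun ε hε => ?_⟩
    have hδ : 0 < ε / (4 * (C + 1)) := by positivity
    obtain ⟨v, hv, hxv⟩ := Metric.dense_iff.1 hV x _ hδ
    obtain ⟨y, hy⟩ := hc v hxv
    have hev := (Metric.tendsto_nhds.1 hy) (ε / 4) (by positivity)
    have hb : ∀ i, dist (S i x) (S i v) ≤ ε / 4 := by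
      intro i
      rw [dist_eq_norm, ← map_sub]
      have h1 : ‖x - v‖ ≤ ε / (4 * (C + 1)) := by
        rw [← dist_eq_norm, dist_comm]; exact (Metric.mem_ball.1 hv).le
      calc ‖S i (x - v)‖ ≤ (C + 1) * (ε / (4 * (C + 1))) :=
            (S i).le_of_opNorm_le_of_le ((hS i).trans (by linarith)) h1
        _ = ε / 4 := by field_simp
    refine ⟨_, image_mem_map hev, ?_⟩
    rintro _ ⟨i, hi, rfl⟩ _ ⟨j, hj, rfl⟩
    have hi' : dist (S i v) y < ε / 4 := hi
    have hj' : dist (S j v) y < ε / 4 := hj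
    have t1 := dist_triangle (S i x) (S i v) y
    have t2 := dist_triangle (S j x) (S j v) y
    have t3 := dist_triangle_right (S i x) (S j x) y
    linarith [hb i, hb j]
  choose f hf using key
  refine ⟨ContinuousLinearMap.ofTendstoOfBoundedRange f S (tendsto_pi_nhds.2 hf) ?_, hf⟩
  refine isBounded_iff_forall_norm_le.2 ⟨C, ?_⟩
  rintro _ ⟨i, rfl⟩
  exact hS i

theorem oac_bound
    {𝕜 : Type*} [RCLike 𝕜]
    {E : Type*} [SeminormedAddCommGroup E] [NormedSpace 𝕜 E]
    (f : E →ₗ[𝕜] E) (hf : Continuous f) : ∃ C : ℝ, 0 ≤ C ∧ ∀ x, ‖f x‖ ≤ C * ‖x‖ :=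
  ⟨‖(⟨f, hf⟩ : E →L[𝕜] E)‖, norm_nonneg _, (⟨f, hf⟩ : E →L[𝕜] E).le_opNorm⟩

theorem oac_surj
    {𝕜 : Type*} [RCLike 𝕜]
    {X : Type*} [NormedAddCommGroup X] [NormedSpace 𝕜 X] [CompleteSpace X]
    (A : NonUnitalSubalgebra 𝕜 (X →L[𝕜] X))
    (hnd : Dense (Submodule.span 𝕜
      (Set.range fun p : A × X => (p.1 : X →L[𝕜] X) p.2) : Set X))
    (m : ℝ) {ι : Type*} (l : Filter ι) [l.NeBot] (e : ι → A)
    (he_bdd : ∀ i, ‖(e i : X →L[𝕜] X)‖ ≤ m)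
    (he_lim : ∀ a : A, Tendsto (fun i => (e i : X →L[𝕜] X) * (a : X →L[𝕜] X)) l
      (𝓝 (a : X →L[𝕜] X)))
    (L : A →L[𝕜] A) (hL : ∀ a b : A, L (a * b) = L a * b) :
    ∃ T : X →L[𝕜] X, ∀ a : A, (L a : X →L[𝕜] X) = T * (a : X →L[𝕜] X) := by
  have hlim : ∀ (a : A) (x : X), Tendsto
      (fun i => (L (e i) : X →L[𝕜] X) ((a : X →L[𝕜] X) x)) l (𝓝 ((L a : X →L[𝕜] X) x)) := by
    intro a x
    have h1 : Tendsto (fun i => e i * a) l (𝓝 a) := tendsto_subtype_rng.2 (he_lim a)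
    have h2 : Tendsto (fun i => ((L (e i * a) : A) : X →L[𝕜] X)) l (𝓝 (L a : X →L[𝕜] X)) :=
      (continuous_subtype_val.comp L.continuous).continuousAt.tendsto.comp h1
    have h3 := ((ContinuousLinearMap.apply 𝕜 X x).continuous.tendsto _).comp h2
    refine h3.congr fun i => ?_
    simp only [Function.comp, hL]
    rfl
  obtain ⟨C, hC⟩ : ∃ C : ℝ, ∀ i, ‖(L (e i) : X →L[𝕜] X)‖ ≤ C := by
    let L' : A.toSubmodule →ₗ[𝕜] A.toSubmodule :=
      { toFun := fun a => L a
        map_add' := fun a b => L.map_add a b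
        map_smul' := fun c a => L.map_smul c a }
    obtain ⟨C, hC0, hC⟩ := oac_bound (𝕜 := 𝕜) (E := A.toSubmodule) L' (by exact L.continuous)
    exact ⟨C * m, fun i => (hC (e i)).trans (mul_le_mul_of_nonneg_left (he_bdd i) hC0)⟩
  obtain ⟨T, hT⟩ := oac_conv l (fun i => (L (e i) : X →L[𝕜] X)) C hC _ hnd (by
      intro x hx
      induction hx using Submodule.span_induction with
      | mem x hx =>
        obtain ⟨⟨a, x⟩, rfl⟩ := hx
        exact ⟨_, hlim a x⟩
      | zero => exact ⟨0, by simp⟩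
      | add x y _ _ hx hy =>
        obtain ⟨u, hu⟩ := hx
        obtain ⟨v, hv⟩ := hy
        exact ⟨u + v, by simpa using hu.add hv⟩
      | smul c x _ hx =>
        obtain ⟨u, hu⟩ := hx
        exact ⟨c • u, by simpa using hu.const_smul c⟩)
  exact ⟨T, fun a => ContinuousLinearMap.ext fun x => tendsto_nhds_unique (hlim a x) (hT _)⟩

/-- **Centralizer algebras of a non-degenerately acting operator algebra.** Let `X` be a
Banach space and `A` a (not necessarily closed) subalgebra of `B(X)` acting non-degenerately
on `X` and possessing a bounded approximate left identity. Then `M_l(A)` is canonically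
isometrically isomorphic with the left normalizer `N_l(A, B(X))` (with the norm from
`M_l(A)`), via `T ↦ (a ↦ Ta)`, and `M(A)` is canonically isometrically isomorphic with
`N(A, B(X))` (with the norm from `M(A)`), via `T ↦ (a ↦ Ta, a ↦ aT)`. -/
theorem operator_algebra_centralizers_isometric
    {𝕜 : Type*} [RCLike 𝕜]
    {X : Type*} [NormedAddCommGroup X] [NormedSpace 𝕜 X] [CompleteSpace X]
    (A : NonUnitalSubalgebra 𝕜 (X →L[𝕜] X))
    (hnd : Dense (Submodule.span 𝕜
      (Set.range fun p : A × X => (p.1 : X →L[𝕜] X) p.2) : Set X))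
    (m : ℝ) {ι : Type*} (l : Filter ι) [l.NeBot] (e : ι → A)
    (he_bdd : ∀ i, ‖(e i : X →L[𝕜] X)‖ ≤ m)
    (he_lim : ∀ a : A, Tendsto (fun i => (e i : X →L[𝕜] X) * (a : X →L[𝕜] X)) l
      (𝓝 (a : X →L[𝕜] X))) :
    -- every `T ∈ N_l(A, B(X))` induces a left centralizer `a ↦ Ta` of `A` ...
    (∀ T : X →L[𝕜] X, (∀ a : A, T * (a : X →L[𝕜] X) ∈ A) →
      ∃ L : A →L[𝕜] A, (∀ a b : A, L (a * b) = L a * b) ∧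
        ∀ a : A, (L a : X →L[𝕜] X) = T * (a : X →L[𝕜] X)) ∧
    -- ... the induced map `N_l(A, B(X)) → M_l(A)` is injective ...
    (∀ T T' : X →L[𝕜] X, (∀ a : A, T * (a : X →L[𝕜] X) ∈ A) →
      (∀ a : A, T' * (a : X →L[𝕜] X) ∈ A) →
      (∀ a : A, T * (a : X →L[𝕜] X) = T' * (a : X →L[𝕜] X)) → T = T') ∧
    -- ... and onto `M_l(A)`:
    (∀ L : A →L[𝕜] A, (∀ a b : A, L (a * b) = L a * b) →
      ∃ T : X →L[𝕜] X, (∀ a : A, T * (a : X →L[𝕜] X) ∈ A) ∧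
        ∀ a : A, (L a : X →L[𝕜] X) = T * (a : X →L[𝕜] X)) ∧
    -- every `T ∈ N(A, B(X))` induces a double centralizer `(a ↦ Ta, a ↦ aT)` of `A` ...
    (∀ T : X →L[𝕜] X,
      (∀ a : A, T * (a : X →L[𝕜] X) ∈ A ∧ (a : X →L[𝕜] X) * T ∈ A) →
      ∃ L R : A →L[𝕜] A,
        (∀ a b : A, L (a * b) = L a * b) ∧
        (∀ a b : A, R (a * b) = a * R b) ∧
        (∀ a b : A, a * L b = R a * b) ∧
        (∀ a : A, (L a : X →L[𝕜] X) = T * (a : X →L[𝕜] X)) ∧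
        (∀ a : A, (R a : X →L[𝕜] X) = (a : X →L[𝕜] X) * T)) ∧
    -- ... and this map is onto the set of double centralizers of `A`:
    (∀ L R : A →L[𝕜] A,
      (∀ a b : A, L (a * b) = L a * b) →
      (∀ a b : A, R (a * b) = a * R b) →
      (∀ a b : A, a * L b = R a * b) →
      ∃ T : X →L[𝕜] X,
        (∀ a : A, T * (a : X →L[𝕜] X) ∈ A ∧ (a : X →L[𝕜] X) * T ∈ A) ∧
        (∀ a : A, (L a : X →L[𝕜] X) = T * (a : X →L[𝕜] X)) ∧
        (∀ a : A, (R a : X →L[𝕜] X) = (a : X →L[𝕜] X) * T)) := by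
  refine ⟨?_, ?_, ?_, ?_, ?_⟩
  · intro T hT
    obtain ⟨L, hL⟩ := oac_left A T hT
    refine ⟨L, fun a b => Subtype.ext ?_, hL⟩
    simp [hL, mul_assoc]
  · intro T T' _ _ h
    exact oac_inj A hnd T T' h
  · intro L hL
    obtain ⟨T, hT⟩ := oac_surj A hnd m l e he_bdd he_lim L hL
    exact ⟨T, fun a => hT a ▸ (L a).2, hT⟩
  · intro T hT
    obtain ⟨L, hL⟩ := oac_left A T fun a => (hT a).1
    obtain ⟨R, hR⟩ := oac_right A T fun a => (hT a).2
    refine ⟨L, R, fun a b => Subtype.ext ?_, fun a b => Subtype.ext ?_,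
      fun a b => Subtype.ext ?_, hL, hR⟩ <;> simp [hL, hR, mul_assoc]
  · intro L R hL _ hLR
    obtain ⟨T, hT⟩ := oac_surj A hnd m l e he_bdd he_lim L hL
    have hR : ∀ a : A, (R a : X →L[𝕜] X) = (a : X →L[𝕜] X) * T := by
      intro a
      refine oac_inj A hnd _ _ fun b => ?_
      have h := congrArg (Subtype.val : A → X →L[𝕜] X) (hLR a b)
      rw [mul_assoc, ← hT b]
      exact h.symm
    exact ⟨T, fun a => ⟨hT a ▸ (L a).2, hR a ▸ (R a).2⟩, hT, hR⟩
end

section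
/- Let A be a normed algebra with an m-bounded approximate right identity, let X be a Banach space, and let π_r : A → B(X) be an injective bounded algebra anti-homomorphism making X a non-degenerate faithful normed right A-module, such that π_r^{-1} : π_r(A) → A is bounded. Then the unique homomorphism π̄_r : M_r(A) → B(X) with π̄_r ∘ ρ = π_r is an algebra ISOMORPHISM from the right centralizer algebra M_r(A) onto the LEFT normalizer N_l(π_r(A), B(X)), with ‖π̄_r‖ ≤ m‖π_r‖ and ‖π̄_r^{-1}‖ ≤ ‖π_r‖·‖π_r^{-1}‖ when N_l(π_r(A), B(X)) carries the operator norm of B(X); and π̄_r ∘ φ_r : M(A) → B(X) is a bounded algebra ANTI-isomorphism from M(A) onto N(π_r(A), B(X)), with ‖π̄_r ∘ φ_r‖ ≤ m‖π_r‖ and ‖(π̄_r ∘ φ_r)^{-1}‖ ≤ ‖π_r‖·‖π_r^{-1}‖. -/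
open Filter Topology

theorem rce_lift {𝕜 : Type*} [RCLike 𝕜]
    {A : Type*} [NonUnitalNormedRing A] [NormedSpace 𝕜 A]
    {X : Type*} [NormedAddCommGroup X] [NormedSpace 𝕜 X]
    (π : A →L[𝕜] X →L[𝕜] X) (hπinj : Function.Injective π)
    (C : ℝ) (hC : ∀ a : A, ‖a‖ ≤ C * ‖π a‖)
    (F : A →L[𝕜] X →L[𝕜] X) (hF : ∀ a, ∃ b, F a = π b) :
    ∃ R : A →L[𝕜] A, ∀ a, π (R a) = F a := by
  choose g hg using hF
  let R₀ : A →ₗ[𝕜] A :=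
    { toFun := g
      map_add' := fun a b => hπinj (by rw [map_add, ← hg, ← hg, ← hg, map_add])
      map_smul' := fun c a => hπinj (by
        rw [RingHom.id_apply, map_smul, ← hg, ← hg, map_smul]) }
  refine ⟨R₀.mkContinuous (|C| * ‖F‖) fun a => ?_, fun a => (hg a).symm⟩
  calc ‖g a‖ ≤ C * ‖π (g a)‖ := hC _
    _ ≤ |C| * ‖F a‖ := by rw [← hg]; gcongr; exact le_abs_self C
    _ ≤ |C| * (‖F‖ * ‖a‖) := by gcongr; exact F.le_opNorm a
    _ = _ := by ring

theorem rce_bound {𝕜 : Type*} [RCLike 𝕜]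
    {A : Type*} [NonUnitalNormedRing A] [NormedSpace 𝕜 A]
    {X : Type*} [NormedAddCommGroup X] [NormedSpace 𝕜 X]
    (π : A →L[𝕜] X →L[𝕜] X)
    (C : ℝ) (hC : ∀ a : A, ‖a‖ ≤ C * ‖π a‖)
    (R : A →L[𝕜] A) (T : X →L[𝕜] X) (h : ∀ a, ‖π (R a)‖ ≤ ‖π a‖ * ‖T‖) :
    ‖R‖ ≤ ‖π‖ * C * ‖T‖ := by
  rcases lt_or_ge C 0 with hneg | hpos
  · have hz : ∀ a : A, a = 0 := fun a => by
      have := hC a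
      have h2 : C * ‖π a‖ ≤ 0 := mul_nonpos_of_nonpos_of_nonneg hneg.le (norm_nonneg _)
      exact norm_le_zero_iff.1 (this.trans h2)
    have hπ0 : ‖π‖ = 0 :=
      le_antisymm (π.opNorm_le_bound le_rfl fun a => by rw [hz a]; simp) π.opNorm_nonneg
    have hR0 : R = 0 := by ext a; rw [hz a]; simp
    rw [hπ0, hR0]; simp
  · refine R.opNorm_le_bound (by positivity) fun a => ?_
    calc ‖R a‖ ≤ C * ‖π (R a)‖ := hC _
      _ ≤ C * (‖π a‖ * ‖T‖) := by gcongr; exact h a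
      _ ≤ C * ((‖π‖ * ‖a‖) * ‖T‖) := by gcongr; exact π.le_opNorm a
      _ = _ := by ring

theorem rce_ext {𝕜 : Type*} [RCLike 𝕜]
    {A : Type*} [NonUnitalNormedRing A] [NormedSpace 𝕜 A]
    {X : Type*} [NormedAddCommGroup X] [NormedSpace 𝕜 X]
    (π : A →L[𝕜] X →L[𝕜] X)
    (hnd : Dense (Submodule.span 𝕜 (Set.range fun p : A × X => π p.1 p.2) : Set X))
    (S T : X →L[𝕜] X) (h : ∀ a, S * π a = T * π a) : S = T := by
  refine ContinuousLinearMap.ext_on hnd ?_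
  rintro _ ⟨⟨a, x⟩, rfl⟩
  exact DFunLike.congr_fun (h a) x

/-- **Right-sided embedding theorem.** Let `A` be a normed algebra with an `m`-bounded
approximate right identity, `X` a Banach space, and `π_r : A → B(X)` an injective bounded
anti-homomorphism making `X` a non-degenerate faithful normed right `A`-module with bounded
inverse `π_r⁻¹` (bounded by `C`). Then the unique homomorphism `π̄_r : M_r(A) → B(X)` with
`π̄_r ∘ ρ = π_r` is an algebra ISOMORPHISM from `M_r(A)` onto the LEFT normalizer
`N_l(π_r(A), B(X))`, with `‖π̄_r‖ ≤ m‖π_r‖` and `‖π̄_r⁻¹‖ ≤ ‖π_r‖·‖π_r⁻¹‖`; and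
`π̄_r ∘ φ_r : M(A) → B(X)`, i.e. `(L,R) ↦ π̄_r(R)`, is a bounded algebra ANTI-isomorphism
from `M(A)` onto `N(π_r(A), B(X))`, with `‖π̄_r ∘ φ_r‖ ≤ m‖π_r‖` and
`‖(π̄_r ∘ φ_r)⁻¹‖ ≤ ‖π_r‖·‖π_r⁻¹‖` (the norms taken in `B(X)`, the norm on `M(A)` being
`max(‖L‖, ‖R‖)`). -/
theorem right_centralizers_embeddings
    {𝕜 : Type*} [RCLike 𝕜]
    {A : Type*} [NonUnitalNormedRing A] [NormedSpace 𝕜 A]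
    [IsScalarTower 𝕜 A A] [SMulCommClass 𝕜 A A]
    {X : Type*} [NormedAddCommGroup X] [NormedSpace 𝕜 X] [CompleteSpace X]
    (m : ℝ) {ι : Type*} (l : Filter ι) [l.NeBot] (e : ι → A)
    (he_bdd : ∀ i, ‖e i‖ ≤ m)
    (he_lim : ∀ a : A, Tendsto (fun i => a * e i) l (𝓝 a))
    (π : A →L[𝕜] X →L[𝕜] X)
    (hπmul : ∀ a b : A, π (a * b) = π b * π a)
    (hπinj : Function.Injective π)
    (hnd : Dense (Submodule.span 𝕜 (Set.range fun p : A × X => π p.1 p.2) : Set X))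
    (C : ℝ) (hC : ∀ a : A, ‖a‖ ≤ C * ‖π a‖)
    -- `π̄_r : M_r(A) → B(X)`, the canonical homomorphism with `π̄_r ∘ ρ = π_r`
    (πbr : RightCentralizers 𝕜 A → X →L[𝕜] X)
    (hπbr_add : ∀ (R S : RightCentralizers 𝕜 A)
      (h : (R : A →L[𝕜] A) + S ∈ RightCentralizers 𝕜 A),
      πbr ⟨(R : A →L[𝕜] A) + S, h⟩ = πbr R + πbr S)
    (hπbr_smul : ∀ (c : 𝕜) (R : RightCentralizers 𝕜 A)
      (h : c • (R : A →L[𝕜] A) ∈ RightCentralizers 𝕜 A),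
      πbr ⟨c • (R : A →L[𝕜] A), h⟩ = c • πbr R)
    (hπbr_mul : ∀ (R S : RightCentralizers 𝕜 A)
      (h : (R : A →L[𝕜] A) * S ∈ RightCentralizers 𝕜 A),
      πbr ⟨(R : A →L[𝕜] A) * S, h⟩ = πbr R * πbr S)
    (hπbr_rho : ∀ (a : A) (h : (ContinuousLinearMap.mul 𝕜 A).flip a ∈ RightCentralizers 𝕜 A),
      πbr ⟨(ContinuousLinearMap.mul 𝕜 A).flip a, h⟩ = π a) :
    -- `π̄_r` maps `M_r(A)` into the LEFT normalizer of `π_r(A)`: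
    (∀ (R : RightCentralizers 𝕜 A) (a : A), πbr R * π a = π ((R : A →L[𝕜] A) a)) ∧
    -- `π̄_r` is injective,
    (∀ R S : RightCentralizers 𝕜 A, πbr R = πbr S → R = S) ∧
    -- `π̄_r` is onto `N_l(π_r(A), B(X))`:
    (∀ T : X →L[𝕜] X, (∀ a : A, ∃ b : A, T * π a = π b) →
      ∃ (R : A →L[𝕜] A) (hR : R ∈ RightCentralizers 𝕜 A),
        πbr ⟨R, hR⟩ = T ∧ ∀ a : A, π (R a) = T * π a) ∧
    -- with `‖π̄_r‖ ≤ m ‖π_r‖` and `‖π̄_r⁻¹‖ ≤ ‖π_r‖ ‖π_r⁻¹‖`: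
    (∀ R : RightCentralizers 𝕜 A, ‖πbr R‖ ≤ m * ‖π‖ * ‖(R : A →L[𝕜] A)‖) ∧
    (∀ R : RightCentralizers 𝕜 A, ‖(R : A →L[𝕜] A)‖ ≤ ‖π‖ * C * ‖πbr R‖) ∧
    -- `π̄_r ∘ φ_r : (L,R) ↦ π̄_r(R)` maps `M(A)` into the normalizer `N(π_r(A), B(X))`,
    -- and is an anti-homomorphism of `M(A)` into `B(X)`:
    (∀ (L R : A →L[𝕜] A) (hDC : IsDoubleCentralizer 𝕜 L R) (a : A),
      πbr ⟨R, hDC.2.1⟩ * π a = π (R a) ∧ π a * πbr ⟨R, hDC.2.1⟩ = π (L a)) ∧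
    (∀ (L₁ R₁ L₂ R₂ : A →L[𝕜] A) (hDC₁ : IsDoubleCentralizer 𝕜 L₁ R₁)
      (hDC₂ : IsDoubleCentralizer 𝕜 L₂ R₂)
      (h : (R₂ : A →L[𝕜] A) * R₁ ∈ RightCentralizers 𝕜 A),
      πbr ⟨R₂ * R₁, h⟩ = πbr ⟨R₂, hDC₂.2.1⟩ * πbr ⟨R₁, hDC₁.2.1⟩) ∧
    -- it is injective on `M(A)`:
    (∀ (L R L' R' : A →L[𝕜] A) (hDC : IsDoubleCentralizer 𝕜 L R)
      (hDC' : IsDoubleCentralizer 𝕜 L' R'),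
      πbr ⟨R, hDC.2.1⟩ = πbr ⟨R', hDC'.2.1⟩ → L = L' ∧ R = R') ∧
    -- onto `N(π_r(A), B(X))`:
    (∀ T : X →L[𝕜] X,
      (∀ a : A, (∃ b : A, T * π a = π b) ∧ (∃ b : A, π a * T = π b)) →
      ∃ (L R : A →L[𝕜] A) (hDC : IsDoubleCentralizer 𝕜 L R),
        πbr ⟨R, hDC.2.1⟩ = T ∧ (∀ a : A, π (R a) = T * π a) ∧
        (∀ a : A, π (L a) = π a * T)) ∧
    -- and with the bounds `m ‖π_r‖` and `‖π_r‖ ‖π_r⁻¹‖`: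
    (∀ (L R : A →L[𝕜] A) (hDC : IsDoubleCentralizer 𝕜 L R),
      ‖πbr ⟨R, hDC.2.1⟩‖ ≤ m * ‖π‖ * max ‖L‖ ‖R‖ ∧
      max ‖L‖ ‖R‖ ≤ ‖π‖ * C * ‖πbr ⟨R, hDC.2.1⟩‖) := by
  have hmem : ∀ a : A, (ContinuousLinearMap.mul 𝕜 A).flip a ∈ RightCentralizers 𝕜 A := by
    intro a b c
    simp [mul_assoc]
  have key : ∀ (R : RightCentralizers 𝕜 A) (a : A),
      πbr R * π a = π ((R : A →L[𝕜] A) a) := by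
    intro R a
    have h1 : (R : A →L[𝕜] A) * (ContinuousLinearMap.mul 𝕜 A).flip a
        = (ContinuousLinearMap.mul 𝕜 A).flip ((R : A →L[𝕜] A) a) := by
      ext b
      simpa using R.2 b a
    have h2 : (R : A →L[𝕜] A) * (ContinuousLinearMap.mul 𝕜 A).flip a
        ∈ RightCentralizers 𝕜 A := by rw [h1]; exact hmem _
    have h3 := hπbr_mul R ⟨_, hmem a⟩ h2
    rw [hπbr_rho] at h3
    rw [← h3, ← hπbr_rho _ (hmem _)]
    congr 1
    exact Subtype.ext h1
  have inj : ∀ R S : RightCentralizers 𝕜 A, πbr R = πbr S → R = S := by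
    intro R S h
    apply Subtype.ext
    ext a
    apply hπinj
    rw [← key, ← key, h]
  have onto : ∀ T : X →L[𝕜] X, (∀ a : A, ∃ b : A, T * π a = π b) →
      ∃ (R : A →L[𝕜] A) (hR : R ∈ RightCentralizers 𝕜 A),
        πbr ⟨R, hR⟩ = T ∧ ∀ a : A, π (R a) = T * π a := by
    intro T hT
    obtain ⟨R, hR⟩ := rce_lift π hπinj C hC
      ((ContinuousLinearMap.mul 𝕜 (X →L[𝕜] X) T).comp π) (fun a => by simpa using hT a)
    have hR' : ∀ a, π (R a) = T * π a := fun a => by simpa using hR a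
    have hRm : R ∈ RightCentralizers 𝕜 A := by
      intro a b
      apply hπinj
      rw [hR', hπmul, hπmul, hR', mul_assoc]
    refine ⟨R, hRm, ?_, hR'⟩
    apply rce_ext π hnd
    intro a
    rw [key, hR']
  have bd : ∀ R : RightCentralizers 𝕜 A, ‖πbr R‖ ≤ m * ‖π‖ * ‖(R : A →L[𝕜] A)‖ := by
    intro R
    obtain ⟨i₀⟩ := l.nonempty_of_neBot
    have hm : 0 ≤ m := (norm_nonneg _).trans (he_bdd i₀)
    have hlim : ∀ x ∈ Submodule.span 𝕜 (Set.range fun p : A × X => π p.1 p.2),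
        Tendsto (fun i => π ((R : A →L[𝕜] A) (e i)) x) l (𝓝 (πbr R x)) := by
      intro x hx
      induction hx using Submodule.span_induction with
      | mem x hx =>
        obtain ⟨⟨a, y⟩, rfl⟩ := hx
        have h1 : πbr R (π a y) = π ((R : A →L[𝕜] A) a) y := DFunLike.congr_fun (key R a) y
        have h2 : ∀ i, π ((R : A →L[𝕜] A) (e i)) (π a y) = π ((R : A →L[𝕜] A) (a * e i)) y := by
          intro i
          rw [R.2, hπmul]
          rfl
        simp only [h1, h2]
        have hc : Continuous fun b : A => π ((R : A →L[𝕜] A) b) y := by fun_prop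
        exact (hc.tendsto a).comp (he_lim a)
      | zero => simp
      | add x y _ _ hx hy => simpa using hx.add hy
      | smul c x _ hx => simpa using hx.const_smul c
    refine ContinuousLinearMap.opNorm_le_bound _ (by positivity) fun x => ?_
    have hcl : IsClosed {x : X | ‖πbr R x‖ ≤ m * ‖π‖ * ‖(R : A →L[𝕜] A)‖ * ‖x‖} :=
      isClosed_le (by fun_prop) (by fun_prop)
    refine hcl.closure_subset_iff.2 ?_ (hnd x)
    intro x hx
    refine le_of_tendsto (hlim x hx).norm (Eventually.of_forall fun i => ?_)
    calc ‖π ((R : A →L[𝕜] A) (e i)) x‖ ≤ ‖π ((R : A →L[𝕜] A) (e i))‖ * ‖x‖ :=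
          ContinuousLinearMap.le_opNorm _ _
      _ ≤ (‖π‖ * (‖(R : A →L[𝕜] A)‖ * m)) * ‖x‖ := by
          gcongr
          refine (π.le_opNorm _).trans ?_
          gcongr
          refine (ContinuousLinearMap.le_opNorm _ _).trans ?_
          gcongr
          exact he_bdd i
      _ = _ := by ring
  have bdinv : ∀ R : RightCentralizers 𝕜 A,
      ‖(R : A →L[𝕜] A)‖ ≤ ‖π‖ * C * ‖πbr R‖ := by
    intro R
    apply rce_bound π C hC
    intro a
    rw [← key, mul_comm]
    exact norm_mul_le _ _
  have keyL : ∀ (L R : A →L[𝕜] A) (hDC : IsDoubleCentralizer 𝕜 L R) (a : A),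
      π a * πbr ⟨R, hDC.2.1⟩ = π (L a) := by
    intro L R hDC a
    apply rce_ext π hnd
    intro b
    rw [mul_assoc, key, ← hπmul, ← hπmul]
    simp only [hDC.2.2]
  refine ⟨key, inj, onto, bd, bdinv, fun L R hDC a => ⟨key _ a, keyL L R hDC a⟩, ?_, ?_, ?_, ?_⟩
  · intro L₁ R₁ L₂ R₂ h₁ h₂ h
    exact hπbr_mul ⟨R₂, h₂.2.1⟩ ⟨R₁, h₁.2.1⟩ h
  · intro L R L' R' h h' heq
    refine ⟨?_, congrArg Subtype.val (inj _ _ heq)⟩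
    ext a
    apply hπinj
    rw [← keyL L R h, ← keyL L' R' h', heq]
  · intro T hT
    obtain ⟨R, hRm, hRT, hR⟩ := onto T fun a => (hT a).1
    obtain ⟨L, hL⟩ := rce_lift π hπinj C hC
      (((ContinuousLinearMap.mul 𝕜 (X →L[𝕜] X)).flip T).comp π)
      (fun a => by simpa using (hT a).2)
    have hL' : ∀ a, π (L a) = π a * T := fun a => by simpa using hL a
    refine ⟨L, R, ⟨?_, hRm, ?_⟩, hRT, hR, hL'⟩
    · intro a b
      apply hπinj
      rw [hL', hπmul, hπmul, hL', mul_assoc]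
    · intro a b
      apply hπinj
      rw [hπmul, hπmul, hL', hR, mul_assoc]
  · intro L R h
    constructor
    · obtain ⟨i₀⟩ := l.nonempty_of_neBot
      have hm : 0 ≤ m := (norm_nonneg _).trans (he_bdd i₀)
      refine (bd ⟨R, h.2.1⟩).trans ?_
      gcongr
      exact le_max_right _ _
    · refine max_le ?_ (bdinv ⟨R, h.2.1⟩)
      apply rce_bound π C hC
      intro a
      rw [← keyL L R h]
      exact norm_mul_le _ _
end
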